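/- Fix constants C_{β₀}, C_u, C₁, C₂, C_η, c_η > 0 with C_η > c_η and c_η < √((1/2)·min{τ², (1−τ)²}). Let (β₀*, M_u*, ρ₁*) denote the unique minimizing triple of the asymptotic program min over (|β₀| ≤ C_{β₀}, 0 ≤ M_u ≤ C_u, 0 ≤ ρ₁ ≤ C₁) of max over (0 < ρ₂ ≤ C₂, c_η ≤ M_η ≤ C_η) of A, and suppose M_u* > 0. Then the maximization over M_η in the asymptotic program has a unique solution; that is, the function M_η ↦ max_{0 < ρ₂ ≤ C₂} min over (|β₀| ≤ C_{β₀}, 0 ≤ M_u ≤ C_u, 0 ≤ ρ₁ ≤ C₁) of A(β₀, M_u, ρ₁, M_η, ρ₂) attains its maximum over [c_η, C_η] at a unique point. -/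

import Mathlib

open MeasureTheory ProbabilityTheory Filter Finset

noncomputable section

/-- The pinball (quantile) loss `ℓ_τ(r) = τ·r − min{r, 0}`. -/
def pinball (τ r : ℝ) : ℝ := τ * r - min r 0

/-- The Moreau envelope of a scalar function, `e_f(x; ρ) = inf_v (x − v)²/(2ρ) + f(v)` for
`ρ > 0`, continuously extended by `e_f(x; 0) = f(x)`. -/
def moreau (f : ℝ → ℝ) (x ρ : ℝ) : ℝ :=
  if ρ = 0 then f x else ⨅ v : ℝ, ((x - v) ^ 2 / (2 * ρ) + f v)

/-- The convex (Fenchel) conjugate of a scalar function, with values in `EReal`. -/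
def conjE (f : ℝ → ℝ) (x : ℝ) : EReal := ⨆ v : ℝ, ((v * x - f v : ℝ) : EReal)

/-- The Moreau envelope of the convex conjugate `f*` of a scalar function `f`. -/
def moreauConj (f : ℝ → ℝ) (x ρ : ℝ) : ℝ :=
  (⨅ v : ℝ, ((((x - v) ^ 2 / (2 * ρ) : ℝ) : EReal) + conjE f v)).toReal

/-- Assumptions on the noise distribution `P_ε`: mean zero, finite second moment and a bounded,
continuous density that is positive on all of `ℝ` (hence, in particular, continuous). -/
structure NoiseAssumption (Pε : Measure ℝ) : Prop where
  mean_zero : ∫ x, x ∂Pε = 0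
  second_moment : Integrable (fun x => x ^ 2) Pε
  density : ∃ f : ℝ → ℝ, Continuous f ∧ (∀ x, 0 < f x) ∧ (∃ C, ∀ x, f x ≤ C) ∧
    Pε = volume.withDensity fun x => ENNReal.ofReal (f x)

/-- The deterministic asymptotic objective
`A(β₀, M_u, ρ₁, M_η, ρ₂) = E[e_{ℓ_τ}(M_u g₁ + ε₁ − β₀; ρ₁/M_η)] − M_η² M_u γ/(2ρ₂)
  + γ E[e_ν((M_η M_u/ρ₂) h₁ + γ √d β̃₁; M_u/ρ₂)] + M_η ρ₁/2 − M_u ρ₂/2`,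
where `(g₁, ε₁) ∼ N(0,1) ⊗ P_ε` and `(h₁, √d β̃₁) ∼ N(0,1) ⊗ P_β`. -/
def asymObj (τ γ : ℝ) (Pε Pβ : Measure ℝ) (ν : ℝ → ℝ) (β₀ Mu ρ₁ Mη ρ₂ : ℝ) : ℝ :=
  (∫ z, moreau (pinball τ) (Mu * z.1 + z.2 - β₀) (ρ₁ / Mη) ∂((gaussianReal 0 1).prod Pε))
    - Mη ^ 2 * Mu * γ / (2 * ρ₂)
    + γ * (∫ z, moreau ν (Mη * Mu / ρ₂ * z.1 + γ * z.2) (Mu / ρ₂)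
        ∂((gaussianReal 0 1).prod Pβ))
    + Mη * ρ₁ / 2 - Mu * ρ₂ / 2

/-- The inner maximum of the asymptotic objective over `M_η ∈ [c_η, C_η]` and `ρ₂ ∈ (0, C₂]`,
as a function of `(β₀, M_u, ρ₁)`. -/
def asymFmax (τ γ : ℝ) (Pε Pβ : Measure ℝ) (ν : ℝ → ℝ) (cη Cη C₂ : ℝ)
    (p : ℝ × ℝ × ℝ) : ℝ :=
  sSup ((fun q : ℝ × ℝ => asymObj τ γ Pε Pβ ν p.1 p.2.1 p.2.2 q.1 q.2) ''
    (Set.Icc cη Cη ×ˢ Set.Ioc (0 : ℝ) C₂))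

/-- The constraint box `{|β₀| ≤ C_{β₀}} × {0 ≤ M_u ≤ C_u} × {0 ≤ ρ₁ ≤ C₁}` of the outer
minimization of the asymptotic program. -/
def asymBox (Cβ0 Cu C₁ : ℝ) : Set (ℝ × ℝ × ℝ) :=
  Set.Icc (-Cβ0) Cβ0 ×ˢ Set.Icc (0 : ℝ) Cu ×ˢ Set.Icc (0 : ℝ) C₁

/-- Parts (v) and (vi) of the regularizer assumption, stated for the limiting scalar penalty `ν`:
there exist a.e. first and second derivatives `D1, D2` of `x ↦ e_{ν*}(x; ρ)` satisfying the
differentiation-under-the-integral / Stein identities, and the expected second derivative is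
bounded away from zero on compacts. -/
def ConjDerivAssumption (γ : ℝ) (Pβ : Measure ℝ) (ν : ℝ → ℝ) : Prop :=
  ∃ D1 D2 : ℝ → ℝ → ℝ,
    (∀ ρ > (0 : ℝ),
      (∀ᵐ x ∂(volume : Measure ℝ), HasDerivAt (fun t => moreauConj ν t ρ) (D1 x ρ) x) ∧
      (∀ᵐ x ∂(volume : Measure ℝ), HasDerivAt (fun t => D1 t ρ) (D2 x ρ) x) ∧
      (∀ c : ℝ,
        HasDerivAt (fun c' => ∫ z, moreauConj ν (c' * z.1 + ρ * γ * z.2) ρ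
            ∂((gaussianReal 0 1).prod Pβ))
          (∫ z, z.1 * D1 (c * z.1 + ρ * γ * z.2) ρ ∂((gaussianReal 0 1).prod Pβ)) c ∧
        (∫ z, z.1 * D1 (c * z.1 + ρ * γ * z.2) ρ ∂((gaussianReal 0 1).prod Pβ))
          = c * ∫ z, D2 (c * z.1 + ρ * γ * z.2) ρ ∂((gaussianReal 0 1).prod Pβ))) ∧
    (∀ A : Set ℝ, IsCompact A → A ⊆ Set.Ioi 0 → ∀ Cρ > (0 : ℝ), ∃ m > (0 : ℝ),
      ∀ c ∈ A, ∀ ρ ∈ Set.Ioc (0 : ℝ) Cρ,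
        m ≤ ∫ z, D2 (c * z.1 + ρ * γ * z.2) ρ ∂((gaussianReal 0 1).prod Pβ))

/-- The outer function of the `M_η`-maximization:
`G(M_η) = max_{ρ₂ ∈ (0,C₂]} min_{(β₀,M_u,ρ₁) ∈ box} A(β₀, M_u, ρ₁, M_η, ρ₂)`. -/
def asymG (τ γ : ℝ) (Pε Pβ : Measure ℝ) (ν : ℝ → ℝ) (Cβ0 Cu C₁ C₂ : ℝ) (Mη : ℝ) : ℝ :=
  sSup ((fun ρ₂ =>
      sInf ((fun p : ℝ × ℝ × ℝ => asymObj τ γ Pε Pβ ν p.1 p.2.1 p.2.2 Mη ρ₂) ''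
        asymBox Cβ0 Cu C₁)) '' Set.Ioc (0 : ℝ) C₂)

/-!
The objective `A` is convex in `x = (β₀, M_u, ρ₁)` and jointly concave in `(M_η, ρ₂)`, so Sion's
theorem provides a saddle value `V` and a minimizer `x⋆` with `sup_{M_η, ρ₂} A(x⋆, ·) = V`.  Both
`G(M_η) = sup_{ρ₂} inf_x A` and the slice `M_η ↦ sup_{ρ₂} A(x⋆, M_η, ρ₂)` are at most `V`, and `G`
is the smaller one.  A maximizing sequence for `V` has a limit point in the closure `ρ₂ ∈ [0, C₂]`;
moving from it towards `ρ₂ = C₂` along segments shows, by concavity, that `G` attains `V`.  Hence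
every maximizer of `G` maximizes the slice at `x⋆`, and the slice has at most one maximizer:

* if `ρ₁⋆ > 0`, the slice is strictly concave.  On the half-plane where the residual is so large
  that the proximal point of the pinball loss lies in its linear part, the envelope of the loss is
  `τ r − τ² ρ₁ / (2 M_η)`.  Since `M_u⋆ > 0`, the Gaussian part of the residual gives that
  half-plane positive mass;
* if `ρ₁⋆ = 0`, the loss term does not depend on `M_η`.  By Moreau's decomposition the remaining
  term is, up to a term free of `M_η`, minus the expected envelope of `ν*`, whose derivative in
  `M_η` is bounded below by a positive constant uniformly in `ρ₂`.  So the slice is strictly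
  decreasing.
-/

section PartialExtrema

variable {α E F : Type*}

/-- The partial supremum `a ↦ sup_{b ∈ S} g a b`.  As everywhere with real `sSup`, it is `0` where
`g a` is unbounded above on `S`. -/
def supOver (S : Set F) (g : α → F → ℝ) (a : α) : ℝ := sSup (g a '' S)

theorem le_supOver {S : Set F} {g : α → F → ℝ} {a : α} {b : F} (hg : BddAbove (g a '' S))
    (hb : b ∈ S) : g a b ≤ supOver S g a :=
  le_csSup hg (Set.mem_image_of_mem _ hb)

theorem supOver_le {S : Set F} {g : α → F → ℝ} {a : α} {t : ℝ} (hS : S.Nonempty)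
    (h : ∀ b ∈ S, g a b ≤ t) : supOver S g a ≤ t :=
  csSup_le (hS.image _) (Set.forall_mem_image.2 h)

theorem exists_lt_of_lt_supOver {S : Set F} {g : α → F → ℝ} {a : α} {t : ℝ} (hS : S.Nonempty)
    (h : t < supOver S g a) : ∃ b ∈ S, t < g a b := by
  obtain ⟨_, ⟨b, hb, rfl⟩, hlt⟩ := exists_lt_of_lt_csSup (hS.image _) h
  exact ⟨b, hb, hlt⟩

theorem supOver_mono {S : Set F} {g h : α → F → ℝ} {a : α} (hS : S.Nonempty)
    (hh : BddAbove (h a '' S)) (hgh : ∀ b ∈ S, g a b ≤ h a b) : supOver S g a ≤ supOver S h a :=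
  supOver_le hS fun b hb => (hgh b hb).trans (le_supOver hh hb)

theorem supOver_add_le {S : Set F} {g : α → F → ℝ} {a a' : α} {δ : ℝ} (hS : S.Nonempty)
    (hg : BddAbove (g a '' S)) (h : ∀ b ∈ S, g a' b + δ ≤ g a b) :
    supOver S g a' + δ ≤ supOver S g a :=
  le_sub_iff_add_le.1 <| supOver_le hS fun b hb =>
    le_sub_iff_add_le.2 ((h b hb).trans (le_supOver hg hb))

theorem supOver_eq_add {S : Set F} {f g : α → F → ℝ} {a : α} {t : ℝ} (hS : S.Nonempty)
    (hg : BddAbove (g a '' S)) (h : ∀ b ∈ S, f a b = t + g a b) :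
    supOver S f a = t + supOver S g a := by
  have himage : f a '' S = OrderIso.addLeft t '' (g a '' S) := by
    rw [Set.image_image]
    exact Set.image_congr h
  rw [supOver, supOver, himage, ← OrderIso.map_csSup' _ (hS.image _) hg, OrderIso.addLeft_apply]

theorem bddAbove_curry_image {A : Set α} {S : Set F} {g : α × F → ℝ} (hg : BddAbove (g '' (A ×ˢ S)))
    {a : α} (ha : a ∈ A) : BddAbove (Function.curry g a '' S) :=
  hg.mono (Set.forall_mem_image.2 fun _ hb => Set.mem_image_of_mem g (Set.mk_mem_prod ha hb))

/-- The value `y ↦ inf_{x ∈ X} f x y` that the minimizing player can secure against `y`.  As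
everywhere with real `sInf`, it is `0` where `f · y` is unbounded below on `X`. -/
def infOver (X : Set E) (f : E → F → ℝ) (y : F) : ℝ := sInf ((fun x => f x y) '' X)

theorem infOver_le {X : Set E} {f : E → F → ℝ} {y : F} {x : E}
    (hf : BddBelow ((fun x => f x y) '' X)) (hx : x ∈ X) : infOver X f y ≤ f x y :=
  csInf_le hf (Set.mem_image_of_mem (fun x => f x y) hx)

theorem concaveOn_of_isGLB [AddCommMonoid α] [Module ℝ α] {ι : Type*} {s : Set α} {g : ι → α → ℝ}
    {G : α → ℝ} (hs : Convex ℝ s) (hg : ∀ i, ConcaveOn ℝ s (g i))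
    (hG : ∀ x ∈ s, IsGLB (Set.range fun i => g i x) (G x)) : ConcaveOn ℝ s G := by
  refine ⟨hs, fun x hx y hy p q hp hq hpq => (hG _ (hs hx hy hp hq hpq)).2 ?_⟩
  rintro _ ⟨i, rfl⟩
  refine le_trans ?_ ((hg i).2 hx hy hp hq hpq)
  exact add_le_add (mul_le_mul_of_nonneg_left ((hG x hx).1 ⟨i, rfl⟩) hp)
    (mul_le_mul_of_nonneg_left ((hG y hy).1 ⟨i, rfl⟩) hq)

theorem concaveOn_supOver [AddCommMonoid α] [Module ℝ α] [AddCommMonoid F] [Module ℝ F]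
    {A : Set α} {S : Set F} {g : α → F → ℝ} (hA : Convex ℝ A) (hS : S.Nonempty)
    (hg : ConcaveOn ℝ (A ×ˢ S) (Function.uncurry g)) (hbdd : ∀ a ∈ A, BddAbove (g a '' S)) :
    ConcaveOn ℝ A (supOver S g) := by
  refine ⟨hA, fun a ha a' ha' p q hp hq hpq => ?_⟩
  refine le_of_forall_pos_lt_add fun ε hε => ?_
  obtain ⟨b, hb, hab⟩ := exists_lt_of_lt_supOver hS (sub_lt_self (supOver S g a) hε)
  obtain ⟨b', hb', hab'⟩ := exists_lt_of_lt_supOver hS (sub_lt_self (supOver S g a') hε)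
  have hmem : p • (a, b) + q • (a', b') ∈ A ×ˢ S := hg.1 ⟨ha, hb⟩ ⟨ha', hb'⟩ hp hq hpq
  have hconc : p * g a b + q * g a' b' ≤ supOver S g (p • a + q • a') :=
    (hg.2 (x := (a, b)) ⟨ha, hb⟩ (y := (a', b')) ⟨ha', hb'⟩ hp hq hpq).trans
      (le_supOver (hbdd _ hmem.1) hmem.2)
  simp only [smul_eq_mul]
  have hlt : p * (supOver S g a - ε) + q * (supOver S g a' - ε) <
      p * g a b + q * g a' b' := by
    rcases hp.eq_or_lt with rfl | hp
    · obtain rfl : q = 1 := by linarith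
      linarith
    · exact add_lt_add_of_lt_of_le (mul_lt_mul_of_pos_left hab hp)
        (mul_le_mul_of_nonneg_left hab'.le hq)
  have hε_split : p * ε + q * ε = ε := by rw [← add_mul, hpq, one_mul]
  linarith

end PartialExtrema

section Minimax

variable {E F : Type*} [TopologicalSpace E] [AddCommGroup E] [Module ℝ E]
  [TopologicalSpace F] [AddCommGroup F] [Module ℝ F]

/-- A convex–concave payoff: `f` is to be minimized over `x ∈ X` and maximized over `y ∈ Y`, with
the semicontinuity of Sion's theorem.  Since `Y` need not be compact, the inner supremum is
required to be finite. -/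
structure IsConvexConcaveOn (X : Set E) (Y : Set F) (f : E → F → ℝ) : Prop where
  convexOn : ∀ y ∈ Y, ConvexOn ℝ X fun x => f x y
  lowerSemicontinuousOn : ∀ y ∈ Y, LowerSemicontinuousOn (fun x => f x y) X
  concaveOn : ∀ x ∈ X, ConcaveOn ℝ Y (f x)
  upperSemicontinuousOn : ∀ x ∈ X, UpperSemicontinuousOn (f x) Y
  bddAbove : ∀ x ∈ X, BddAbove (f x '' Y)

namespace IsConvexConcaveOn

variable {X : Set E} {Y : Set F} {f : E → F → ℝ}

theorem bddBelow (hf : IsConvexConcaveOn X Y f) (hX : IsCompact X) {y : F} (hy : y ∈ Y) :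
    BddBelow ((fun x => f x y) '' X) :=
  (hf.lowerSemicontinuousOn y hy).bddBelow_of_isCompact hX

theorem exists_isMinOn_supOver (hf : IsConvexConcaveOn X Y f) (hX : IsCompact X)
    (hXne : X.Nonempty) (hYne : Y.Nonempty) : ∃ x ∈ X, IsMinOn (supOver Y f) X x := by
  refine LowerSemicontinuousOn.exists_isMinOn hXne hX fun x hx t ht => ?_
  obtain ⟨y, hy, hty⟩ := exists_lt_of_lt_supOver hYne ht
  filter_upwards [hf.lowerSemicontinuousOn y hy x hx t hty, self_mem_nhdsWithin] with x' hlt hx'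
  exact hlt.trans_le (le_supOver (hf.bddAbove x' hx') hy)

theorem infOver_le_supOver (hf : IsConvexConcaveOn X Y f) (hX : IsCompact X) {x : E} (hx : x ∈ X)
    {y : F} (hy : y ∈ Y) : infOver X f y ≤ supOver Y f x :=
  (infOver_le (hf.bddBelow hX hy) hx).trans (le_supOver (hf.bddAbove x hx) hy)

theorem bddAbove_infOver (hf : IsConvexConcaveOn X Y f) (hX : IsCompact X) (hXne : X.Nonempty) :
    BddAbove (infOver X f '' Y) := by
  obtain ⟨x, hx⟩ := hXne
  exact ⟨supOver Y f x, Set.forall_mem_image.2 fun y hy => hf.infOver_le_supOver hX hx hy⟩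

theorem supOver_eq_sSup_infOver [IsTopologicalAddGroup E] [ContinuousSMul ℝ E]
    [IsTopologicalAddGroup F] [ContinuousSMul ℝ F] (hf : IsConvexConcaveOn X Y f)
    (hX : IsCompact X) (hYne : Y.Nonempty) {x : E} (hx : x ∈ X)
    (hmin : IsMinOn (supOver Y f) X x) : supOver Y f x = sSup (infOver X f '' Y) := by
  have hXne : X.Nonempty := ⟨x, hx⟩
  obtain ⟨y, hy⟩ := hYne
  refine Sion.minimax hXne hX hf.lowerSemicontinuousOn
    (fun y hy => (hf.convexOn y hy).quasiconvexOn)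
    (hf.concaveOn x hx).1 hf.upperSemicontinuousOn (fun x hx => (hf.concaveOn x hx).quasiconcaveOn)
    (hf.convexOn y hy).1 (supOver Y f) (fun x hx => ?_) _ ⟨?_, fun t ht => ht ⟨x, hx, rfl⟩⟩
    (infOver X f) (fun y hy => ?_) _ ?_
  · exact isLUB_csSup ⟨_, y, hy, rfl⟩ (hf.bddAbove x hx)
  · rintro _ ⟨x', hx', rfl⟩
    exact hmin hx'
  · exact isGLB_csInf (hXne.image _) (hf.bddBelow hX hy)
  · exact isLUB_csSup ⟨_, y, hy, rfl⟩ (hf.bddAbove_infOver hX hXne)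

theorem concaveOn_infOver (hf : IsConvexConcaveOn X Y f) (hX : IsCompact X) (hXne : X.Nonempty) :
    ConcaveOn ℝ Y (infOver X f) := by
  obtain ⟨x₀, hx₀⟩ := hXne
  refine concaveOn_of_isGLB (hf.concaveOn x₀ hx₀).1 (fun x : X => hf.concaveOn x x.2) fun y hy => ?_
  rw [← Set.image_eq_range (fun x => f x y)]
  exact isGLB_csInf ⟨_, x₀, hx₀, rfl⟩ (hf.bddBelow hX hy)

theorem upperSemicontinuousOn_infOver (hf : IsConvexConcaveOn X Y f) (hX : IsCompact X)
    (hXne : X.Nonempty) : UpperSemicontinuousOn (infOver X f) Y := by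
  intro y hy t ht
  obtain ⟨_, ⟨x, hx, rfl⟩, hxt⟩ := exists_lt_of_csInf_lt (hXne.image _) ht
  filter_upwards [hf.upperSemicontinuousOn x hx y hy t hxt, self_mem_nhdsWithin] with y' hlt hy'
  exact (infOver_le (hf.bddBelow hX hy') hx).trans_lt hlt

end IsConvexConcaveOn

theorem exists_maximizing_filter {α : Type*} [TopologicalSpace α] {Y C : Set α} (hC : IsCompact C)
    (hYC : Y ⊆ C) (hY : Y.Nonempty) {m : α → ℝ} (hm : BddAbove (m '' Y)) :
    ∃ y₀ ∈ C, ∃ l : Filter α, l.NeBot ∧ l ≤ nhds y₀ ∧ l ≤ 𝓟 Y ∧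
      Tendsto m l (nhds (sSup (m '' Y))) := by
  have : (comap m (nhds (sSup (m '' Y))) ⊓ 𝓟 Y).NeBot := by
    rw [neBot_inf_comap_iff_map', map_principal]
    exact mem_closure_iff_clusterPt.1 (csSup_mem_closure (hY.image m) hm)
  obtain ⟨y₀, hy₀, hclus⟩ := hC (f := comap m (nhds (sSup (m '' Y))) ⊓ 𝓟 Y)
    (inf_le_right.trans (principal_mono.2 hYC))
  exact ⟨y₀, hy₀, _, hclus, inf_le_left, inf_le_right.trans inf_le_right,
    tendsto_comap.mono_left (inf_le_right.trans inf_le_left)⟩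

variable [IsTopologicalAddGroup F] [ContinuousSMul ℝ F]

theorem le_map_segment_of_tendsto {Y : Set F} {m : F → ℝ} (hm : ConcaveOn ℝ Y m)
    (husc : UpperSemicontinuousOn m Y) {l : Filter F} [l.NeBot] (hlY : l ≤ 𝓟 Y)
    {y₀ z : F} (hly : l ≤ nhds y₀) {V : ℝ} (hlm : Tendsto m l (nhds V)) (hz : z ∈ Y) {p q : ℝ}
    (hp : 0 ≤ p) (hq : 0 ≤ q) (hpq : p + q = 1) (hmem : p • y₀ + q • z ∈ Y) :
    p * V + q * m z ≤ m (p • y₀ + q • z) := by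
  have hYl : ∀ᶠ y in l, y ∈ Y := le_principal_iff.1 hlY
  refine le_of_forall_gt_imp_ge_of_dense fun t ht => ?_
  have hsegment : Continuous fun y => p • y + q • z :=
    (continuous_const_smul p).add continuous_const
  have hseg : Tendsto (fun y => p • y + q • z) l (nhdsWithin (p • y₀ + q • z) Y) :=
    tendsto_nhdsWithin_iff.2 ⟨(hsegment.tendsto y₀).mono_left hly,
      hYl.mono fun y hy => hm.1 hy hz hp hq hpq⟩
  refine le_of_tendsto ((hlm.const_mul p).add_const _) ?_
  filter_upwards [hYl, hseg.eventually (husc _ hmem t ht)] with y hy hyt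
  exact (hm.2 hy hz hp hq hpq).trans hyt.le

theorem exists_sSup_le_supOver_Ioc {K : Set F} (hK : IsCompact K) (hKne : K.Nonempty) {a b : ℝ}
    (hab : a < b) {m : F × ℝ → ℝ} (hm : ConcaveOn ℝ (K ×ˢ Set.Ioc a b) m)
    (husc : UpperSemicontinuousOn m (K ×ˢ Set.Ioc a b))
    (hbdd : BddAbove (m '' (K ×ˢ Set.Ioc a b))) :
    ∃ M ∈ K, sSup (m '' (K ×ˢ Set.Ioc a b)) ≤ supOver (Set.Ioc a b) (Function.curry m) M := by
  obtain ⟨⟨M, r⟩, ⟨hM, hr⟩, l, _, hl, hlY, hlm⟩ := exists_maximizing_filter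
    (hK.prod isCompact_Icc) (Set.prod_mono_right Set.Ioc_subset_Icc_self)
    (hKne.prod (Set.nonempty_Ioc.2 hab)) hbdd
  refine ⟨M, hM, ?_⟩
  -- The limit `r` may be the missing end `a`: move a fraction `1 - p` of the way to `b`, and let
  -- `p → 1`.
  have hmix : ∀ p ∈ Set.Ico (0 : ℝ) 1, p * sSup (m '' (K ×ˢ Set.Ioc a b)) + (1 - p) * m (M, b) ≤
      supOver (Set.Ioc a b) (Function.curry m) M := by
    rintro p ⟨hp, hp1⟩
    have hpoint : p • (M, r) + (1 - p) • (M, b) = (M, p * r + (1 - p) * b) := by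
      ext
      · simp [← add_smul]
      · simp
    have hIoc : p * r + (1 - p) * b ∈ Set.Ioc a b := by
      constructor <;> nlinarith [hr.1, hr.2]
    have hseg := le_map_segment_of_tendsto hm husc hlY hl hlm (z := (M, b)) ⟨hM, hab, le_rfl⟩ hp
      (sub_nonneg.2 hp1.le) (add_sub_cancel _ _) (by rw [hpoint]; exact ⟨hM, hIoc⟩)
    rw [hpoint] at hseg
    exact hseg.trans (le_supOver (bddAbove_curry_image hbdd hM) hIoc)
  have hlim : Tendsto (fun p : ℝ => p * sSup (m '' (K ×ˢ Set.Ioc a b)) + (1 - p) * m (M, b))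
      (nhdsWithin 1 (Set.Iio 1)) (nhds (sSup (m '' (K ×ˢ Set.Ioc a b)))) :=
    ((by fun_prop : Continuous fun p : ℝ =>
      p * sSup (m '' (K ×ˢ Set.Ioc a b)) + (1 - p) * m (M, b)).tendsto' 1 _ (by simp)).mono_left
      nhdsWithin_le_nhds
  refine le_of_tendsto hlim ?_
  filter_upwards [Ico_mem_nhdsLT (zero_lt_one' ℝ)] with p hp using hmix p hp

theorem IsConvexConcaveOn.existsUnique_isMaxOn_supOver_infOver [IsTopologicalAddGroup E]
    [ContinuousSMul ℝ E] {X : Set E} {K : Set F} {a b : ℝ} {f : E → F × ℝ → ℝ}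
    (hf : IsConvexConcaveOn X (K ×ˢ Set.Ioc a b) f) (hX : IsCompact X) (hXne : X.Nonempty)
    (hK : IsCompact K) (hKne : K.Nonempty) (hab : a < b)
    (huniq : ∀ x ∈ X, IsMinOn (supOver (K ×ˢ Set.Ioc a b) f) X x →
      {M | M ∈ K ∧ IsMaxOn (supOver (Set.Ioc a b) (Function.curry (f x))) K M}.Subsingleton) :
    ∃! M, M ∈ K ∧ IsMaxOn (supOver (Set.Ioc a b) (Function.curry (infOver X f))) K M := by
  have hIoc : (Set.Ioc a b).Nonempty := Set.nonempty_Ioc.2 hab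
  obtain ⟨x, hx, hmin⟩ := hf.exists_isMinOn_supOver hX hXne (hKne.prod hIoc)
  set V := supOver (K ×ˢ Set.Ioc a b) f x with hV
  have hle_fiber : ∀ M ∈ K, supOver (Set.Ioc a b) (Function.curry (infOver X f)) M ≤
      supOver (Set.Ioc a b) (Function.curry (f x)) M := fun M hM =>
    supOver_mono hIoc (bddAbove_curry_image (hf.bddAbove x hx) hM) fun ρ hρ =>
      infOver_le (hf.bddBelow hX ⟨hM, hρ⟩) hx
  have hfiber_le : ∀ M ∈ K, supOver (Set.Ioc a b) (Function.curry (f x)) M ≤ V := fun M hM =>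
    supOver_le hIoc fun ρ hρ => le_supOver (hf.bddAbove x hx) (Set.mk_mem_prod hM hρ)
  obtain ⟨M, hM, hVM⟩ := exists_sSup_le_supOver_Ioc hK hKne hab (hf.concaveOn_infOver hX hXne)
    (hf.upperSemicontinuousOn_infOver hX hXne) (hf.bddAbove_infOver hX hXne)
  rw [← hf.supOver_eq_sSup_infOver hX (hKne.prod hIoc) hx hmin, ← hV] at hVM
  refine ⟨M, ⟨hM, fun N hN => ((hle_fiber N hN).trans (hfiber_le N hN)).trans hVM⟩, ?_⟩
  have hmax : ∀ N ∈ K, V ≤ supOver (Set.Ioc a b) (Function.curry (infOver X f)) N →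
      IsMaxOn (supOver (Set.Ioc a b) (Function.curry (f x))) K N := fun N hN hVN N' hN' =>
    (hfiber_le N' hN').trans (hVN.trans (hle_fiber N hN))
  rintro N ⟨hN, hNmax⟩
  exact huniq x hx hmin ⟨hN, hmax N hN (hVM.trans (hNmax hM))⟩ ⟨hM, hmax M hM hVM⟩

end Minimax
section Subgradient

/-- `s` is a subgradient of the real function `f` at `w`. -/
def IsSubgradientAt (f : ℝ → ℝ) (s w : ℝ) : Prop := ∀ u, f w + s * (u - w) ≤ f u

theorem exists_isSubgradientAt {f : ℝ → ℝ} (hf : ConvexOn ℝ Set.univ f) (w : ℝ) :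
    ∃ s, IsSubgradientAt f s w := by
  have hw : w ∈ interior (Set.univ : Set ℝ) := by simp
  refine ⟨derivWithin f (Set.Ioi w) w, fun u => ?_⟩
  rcases lt_trichotomy u w with hu | rfl | hu
  · have hslope := (hf.slope_le_leftDeriv_of_mem_interior (Set.mem_univ u) hw hu).trans
      (hf.leftDeriv_le_rightDeriv_of_mem_interior hw)
    rw [slope_def_field, div_le_iff₀ (sub_pos.2 hu)] at hslope
    linarith
  · simp
  · have hslope := hf.rightDeriv_le_slope_of_mem_interior hw (Set.mem_univ u) hu
    rw [slope_def_field, le_div_iff₀ (sub_pos.2 hu)] at hslope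
    linarith

/-- First-order optimality in the proximal problem: compare the minimizer `w` with
`w + t (u - w)` and let `t → 0`. -/
theorem isSubgradientAt_of_isMinOn_quadratic_add {f : ℝ → ℝ} (hf : ConvexOn ℝ Set.univ f)
    {x w ρ : ℝ} (hρ : ρ ≠ 0)
    (hw : IsMinOn (fun v => (x - v) ^ 2 / (2 * ρ) + f v) Set.univ w) :
    IsSubgradientAt f ((x - w) / ρ) w := by
  intro u
  have hstep : ∀ t ∈ Set.Ioo (0 : ℝ) 1,
      f w + (x - w) / ρ * (u - w) ≤ f u + t * ((u - w) ^ 2 / (2 * ρ)) := by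
    rintro t ⟨ht0, ht1⟩
    have hmin := hw (Set.mem_univ ((1 - t) * w + t * u))
    have hconv := hf.2 (Set.mem_univ w) (Set.mem_univ u) (sub_nonneg.2 ht1.le) ht0.le
      (sub_add_cancel 1 t)
    simp only [smul_eq_mul, Set.mem_ofPred_eq] at hconv hmin
    have hexpand : (x - ((1 - t) * w + t * u)) ^ 2 / (2 * ρ) = (x - w) ^ 2 / (2 * ρ) -
        t * ((x - w) / ρ * (u - w)) + t * (t * ((u - w) ^ 2 / (2 * ρ))) := by
      field_simp
      ring
    rw [hexpand] at hmin
    refine le_of_mul_le_mul_left ?_ ht0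
    linarith
  have hlim : Tendsto (fun t : ℝ => f u + t * ((u - w) ^ 2 / (2 * ρ)))
      (nhdsWithin 0 (Set.Ioi 0)) (nhds (f u)) :=
    ((by fun_prop : Continuous fun t : ℝ => f u + t * ((u - w) ^ 2 / (2 * ρ))).tendsto' 0 _
      (by simp)).mono_left nhdsWithin_le_nhds
  refine ge_of_tendsto hlim ?_
  filter_upwards [Ioo_mem_nhdsGT (zero_lt_one' ℝ)] with t ht using hstep t ht

theorem exists_isMinOn_quadratic_add {f : ℝ → ℝ} (hf : ConvexOn ℝ Set.univ f) {ρ : ℝ} (hρ : 0 < ρ)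
    (x : ℝ) : ∃ w, IsMinOn (fun v => (x - v) ^ 2 / (2 * ρ) + f v) Set.univ w := by
  obtain ⟨s, hs⟩ := exists_isSubgradientAt hf x
  have hcont : Continuous fun v => (x - v) ^ 2 / (2 * ρ) + f v :=
    (by fun_prop : Continuous fun v => (x - v) ^ 2 / (2 * ρ)).add
      (continuousOn_univ.1 (hf.continuousOn isOpen_univ))
  have hcoercive : Tendsto (fun v => (x - v) ^ 2 / (2 * ρ) + f v) (cocompact ℝ) atTop := by
    have hnorm : Tendsto (fun v : ℝ => ‖v - (x - ρ * s)‖) (cocompact ℝ) atTop :=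
      tendsto_norm_cocompact_atTop.comp
        (Homeomorph.subRight (x - ρ * s)).isClosedEmbedding.tendsto_cocompact
    refine tendsto_atTop_mono (fun v => ?_) (tendsto_atTop_add_const_right _ (f x - ρ * s ^ 2 / 2)
      (((tendsto_pow_atTop two_ne_zero).comp hnorm).atTop_div_const (by positivity : 0 < 2 * ρ)))
    have hsquare : (v - (x - ρ * s)) ^ 2 / (2 * ρ) + (f x - ρ * s ^ 2 / 2) =
        (x - v) ^ 2 / (2 * ρ) + (f x + s * (v - x)) := by
      field_simp
      ring
    simp only [Function.comp_apply, Real.norm_eq_abs, sq_abs, hsquare]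
    linarith [hs v]
  obtain ⟨w, hw⟩ := hcont.exists_forall_le hcoercive
  exact ⟨w, fun v _ => hw v⟩

/-- Minty's theorem on the line: `id + ρ ∂f` is onto. -/
theorem exists_isSubgradientAt_add_mul_eq {f : ℝ → ℝ} (hf : ConvexOn ℝ Set.univ f) {ρ : ℝ}
    (hρ : 0 ≤ ρ) (x : ℝ) : ∃ w s, IsSubgradientAt f s w ∧ w + ρ * s = x := by
  rcases hρ.eq_or_lt with rfl | hρ
  · obtain ⟨s, hs⟩ := exists_isSubgradientAt hf x
    exact ⟨x, s, hs, by simp⟩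
  · obtain ⟨w, hw⟩ := exists_isMinOn_quadratic_add hf hρ x
    exact ⟨w, _, isSubgradientAt_of_isMinOn_quadratic_add hf hρ.ne' hw, by field_simp; ring⟩

end Subgradient

section Moreau

variable {f : ℝ → ℝ}

theorem moreau_zero (f : ℝ → ℝ) (x : ℝ) : moreau f x 0 = f x := if_pos rfl

theorem moreau_of_ne_zero (f : ℝ → ℝ) (x : ℝ) {ρ : ℝ} (hρ : ρ ≠ 0) :
    moreau f x ρ = ⨅ v : ℝ, ((x - v) ^ 2 / (2 * ρ) + f v) := if_neg hρ

namespace IsSubgradientAt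

variable {s w : ℝ}

theorem affine_le_quadratic_add (hs : IsSubgradientAt f s w) {ρ : ℝ} (hρ : 0 < ρ) (x v : ℝ) :
    f w + s * (x - w) - ρ * s ^ 2 / 2 ≤ (x - v) ^ 2 / (2 * ρ) + f v := by
  have hsquare : (x - v) ^ 2 / (2 * ρ) + s * (v - x) + ρ * s ^ 2 / 2 =
      (x - v - ρ * s) ^ 2 / (2 * ρ) := by
    field_simp
    ring
  have : 0 ≤ (x - v - ρ * s) ^ 2 / (2 * ρ) := by positivity
  linarith [hs v]

theorem affine_le_moreau (hs : IsSubgradientAt f s w) {ρ : ℝ} (hρ : 0 ≤ ρ) (x : ℝ) :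
    f w + s * (x - w) - ρ * s ^ 2 / 2 ≤ moreau f x ρ := by
  rcases hρ.eq_or_lt with rfl | hρ
  · simpa [moreau_zero] using hs x
  · rw [moreau_of_ne_zero f x hρ.ne']
    exact le_ciInf fun v => hs.affine_le_quadratic_add hρ x v

theorem moreau_le (hs : IsSubgradientAt f s w) {ρ : ℝ} (hρ : 0 < ρ) (x v : ℝ) :
    moreau f x ρ ≤ (x - v) ^ 2 / (2 * ρ) + f v := by
  rw [moreau_of_ne_zero f x hρ.ne']
  exact ciInf_le ⟨_, Set.forall_mem_range.2 fun v => hs.affine_le_quadratic_add hρ x v⟩ v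

theorem moreau_add_mul_eq (hs : IsSubgradientAt f s w) {ρ : ℝ} (hρ : 0 ≤ ρ) :
    moreau f (w + ρ * s) ρ = f w + ρ * s ^ 2 / 2 := by
  refine le_antisymm ?_ (le_trans (le_of_eq (by ring)) (hs.affine_le_moreau hρ (w + ρ * s)))
  rcases hρ.eq_or_lt with rfl | hρ
  · simp [moreau_zero]
  · refine (hs.moreau_le hρ _ w).trans (le_of_eq ?_)
    field_simp
    ring

theorem conjE_eq (hs : IsSubgradientAt f s w) : conjE f s = ((w * s - f w : ℝ) : EReal) :=
  le_antisymm (iSup_le fun v => EReal.coe_le_coe_iff.2 (by linarith [hs v]))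
    (le_iSup (fun v : ℝ => ((v * s - f v : ℝ) : EReal)) w)

theorem moreauConj_add_mul_eq (hs : IsSubgradientAt f s w) {ρ : ℝ} (hρ : 0 < ρ) :
    moreauConj f (s + ρ * w) ρ = w * s - f w + ρ * w ^ 2 / 2 := by
  have hquadratic : ∀ v : ℝ, w * s - f w + ρ * w ^ 2 / 2 + (s - v) ^ 2 / (2 * ρ) =
      (s + ρ * w - v) ^ 2 / (2 * ρ) + (w * v - f w) := fun v => by
    field_simp
    ring
  suffices h : (⨅ v : ℝ, ((((s + ρ * w - v) ^ 2 / (2 * ρ) : ℝ) : EReal) + conjE f v)) =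
      ((w * s - f w + ρ * w ^ 2 / 2 : ℝ) : EReal) by
    rw [moreauConj, h, EReal.toReal_coe]
  refine le_antisymm (iInf_le_of_le s ?_) (le_iInf fun v => ?_)
  · rw [hs.conjE_eq, ← EReal.coe_add, ← hquadratic, sub_self]
    simp
  · calc ((w * s - f w + ρ * w ^ 2 / 2 : ℝ) : EReal)
        ≤ (((s + ρ * w - v) ^ 2 / (2 * ρ) + (w * v - f w) : ℝ) : EReal) := by
          rw [← hquadratic, EReal.coe_le_coe_iff]
          exact le_add_of_nonneg_right (by positivity)
      _ ≤ _ := by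
          rw [EReal.coe_add]
          gcongr
          exact le_iSup (fun u : ℝ => ((u * v - f u : ℝ) : EReal)) w

theorem abs_le_of_lipschitzWith (hs : IsSubgradientAt f s w) {L : NNReal} (hf : LipschitzWith L f) :
    |s| ≤ L := by
  have hup := (le_abs_self _).trans (hf.dist_le_mul (w + 1) w)
  have hdown := (le_abs_self _).trans (hf.dist_le_mul (w - 1) w)
  simp only [Real.dist_eq, add_sub_cancel_left, sub_sub_cancel_left, abs_one, abs_neg,
    mul_one] at hup hdown
  exact abs_le.2 ⟨by linarith [hs (w - 1)], by linarith [hs (w + 1)]⟩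

end IsSubgradientAt

theorem moreauConj_eq (hf : ConvexOn ℝ Set.univ f) {ρ : ℝ} (hρ : 0 < ρ) (y : ℝ) :
    moreauConj f y ρ = y ^ 2 / (2 * ρ) - moreau f (y / ρ) (1 / ρ) := by
  obtain ⟨w, s, hs, hws⟩ := exists_isSubgradientAt_add_mul_eq hf (one_div_pos.2 hρ).le (y / ρ)
  obtain rfl : y = s + ρ * w := by
    field_simp at hws
    linarith
  rw [hs.moreauConj_add_mul_eq hρ, ← hws, hs.moreau_add_mul_eq (one_div_pos.2 hρ).le]
  field_simp
  ring

theorem isGLB_moreau (hf : ConvexOn ℝ Set.univ f) {ρ : ℝ} (hρ : 0 < ρ) (x : ℝ) :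
    IsGLB (Set.range fun v => (x - v) ^ 2 / (2 * ρ) + f v) (moreau f x ρ) := by
  obtain ⟨s, hs⟩ := exists_isSubgradientAt hf x
  rw [moreau_of_ne_zero f x hρ.ne']
  exact isGLB_ciInf ⟨_, Set.forall_mem_range.2 fun v => hs.affine_le_quadratic_add hρ x v⟩

theorem moreau_le_self (hf : ConvexOn ℝ Set.univ f) {ρ : ℝ} (hρ : 0 ≤ ρ) (x : ℝ) :
    moreau f x ρ ≤ f x := by
  obtain ⟨w, s, hs, rfl⟩ := exists_isSubgradientAt_add_mul_eq hf hρ x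
  have := mul_nonneg hρ (sq_nonneg s)
  linarith [hs.moreau_add_mul_eq hρ, hs (w + ρ * s)]

theorem convexOn_moreau (hf : ConvexOn ℝ Set.univ f) :
    ConvexOn ℝ {p : ℝ × ℝ | 0 ≤ p.2} fun p => moreau f p.1 p.2 := by
  have hconvex : Convex ℝ {p : ℝ × ℝ | 0 ≤ p.2} :=
    convex_halfSpace_ge (LinearMap.snd ℝ ℝ ℝ).isLinear 0
  refine ⟨hconvex, ?_⟩
  rintro ⟨x, ρ⟩ hρ ⟨y, σ⟩ hσ p q hp hq hpq
  have hmem := hconvex hρ hσ hp hq hpq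
  obtain ⟨w, s, hs, hws⟩ := exists_isSubgradientAt_add_mul_eq hf hmem (p * x + q * y)
  simp only [Set.mem_ofPred_eq, Prod.smul_mk, Prod.mk_add_mk, smul_eq_mul] at hρ hσ hmem hws ⊢
  rw [← hws, hs.moreau_add_mul_eq hmem]
  calc f w + (p * ρ + q * σ) * s ^ 2 / 2
      = p * (f w + s * (x - w) - ρ * s ^ 2 / 2) + q * (f w + s * (y - w) - σ * s ^ 2 / 2) := by
        linear_combination (s * w - f w) * hpq + s * hws
    _ ≤ p * moreau f x ρ + q * moreau f y σ := by
        gcongr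
        exacts [hs.affine_le_moreau hρ x, hs.affine_le_moreau hσ y]

theorem moreau_sub_moreau_le {L : NNReal} (hf : ConvexOn ℝ Set.univ f) (hL : LipschitzWith L f)
    {ρ σ : ℝ} (hρ : 0 ≤ ρ) (hσ : 0 ≤ σ) (x y : ℝ) :
    moreau f x ρ - moreau f y σ ≤ L * |x - y| + L ^ 2 / 2 * |ρ - σ| := by
  obtain ⟨w, s, hs, rfl⟩ := exists_isSubgradientAt_add_mul_eq hf hρ x
  have hsL : |s| ≤ L := hs.abs_le_of_lipschitzWith hL
  calc moreau f (w + ρ * s) ρ - moreau f y σ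
      ≤ s * (w + ρ * s - y) + s ^ 2 / 2 * (σ - ρ) := by
        rw [hs.moreau_add_mul_eq hρ]
        linarith [hs.affine_le_moreau hσ y]
    _ ≤ |s| * |w + ρ * s - y| + |s| ^ 2 / 2 * |ρ - σ| := by
        rw [sq_abs, abs_sub_comm ρ σ, ← abs_mul]
        gcongr <;> exact le_abs_self _
    _ ≤ _ := by gcongr

theorem abs_moreau_sub_moreau_le {L : NNReal} (hf : ConvexOn ℝ Set.univ f) (hL : LipschitzWith L f)
    {ρ σ : ℝ} (hρ : 0 ≤ ρ) (hσ : 0 ≤ σ) (x y : ℝ) :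
    |moreau f x ρ - moreau f y σ| ≤ L * |x - y| + L ^ 2 / 2 * |ρ - σ| := by
  refine abs_sub_le_iff.2 ⟨moreau_sub_moreau_le hf hL hρ hσ x y, ?_⟩
  rw [abs_sub_comm x, abs_sub_comm ρ]
  exact moreau_sub_moreau_le hf hL hσ hρ y x

theorem concaveOn_moreau_div (hf : ConvexOn ℝ Set.univ f) {ρ : ℝ} (hρ : 0 ≤ ρ) (x : ℝ) :
    ConcaveOn ℝ (Set.Ioi 0) fun M => moreau f x (ρ / M) := by
  rcases hρ.eq_or_lt with rfl | hρ
  · simpa only [zero_div] using concaveOn_const _ (convex_Ioi 0)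
  · refine concaveOn_of_isGLB (g := fun v M => M * ((x - v) ^ 2 / (2 * ρ)) + f v) (convex_Ioi 0)
      (fun v => ((LinearMap.mulRight ℝ _).concaveOn (convex_Ioi 0)).add_const _) fun M hM => ?_
    convert isGLB_moreau hf (div_pos hρ hM) x using 4 with v
    have := (Set.mem_Ioi.1 hM).ne'
    field_simp

end Moreau

section Pinball

theorem convexOn_pinball (τ : ℝ) : ConvexOn ℝ Set.univ (pinball τ) :=
  ((LinearMap.mulLeft ℝ τ).convexOn convex_univ).sub
    ((concaveOn_id convex_univ).inf (concaveOn_const 0 convex_univ))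

theorem lipschitzWith_pinball (τ : ℝ) : LipschitzWith (‖τ‖₊ + 1) (pinball τ) :=
  (lipschitzWith_smul τ).sub (LipschitzWith.id.min_const 0)

theorem isSubgradientAt_pinball (τ : ℝ) {w : ℝ} (hw : 0 ≤ w) : IsSubgradientAt (pinball τ) τ w := by
  intro u
  simp only [pinball, min_eq_right hw]
  linarith [min_le_right u 0]

theorem moreau_pinball_of_le (τ : ℝ) {x ρ : ℝ} (hρ : 0 ≤ ρ) (hx : ρ * τ ≤ x) :
    moreau (pinball τ) x ρ = τ * x - ρ * τ ^ 2 / 2 := by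
  obtain ⟨w, hw, rfl⟩ : ∃ w, 0 ≤ w ∧ x = w + ρ * τ := ⟨x - ρ * τ, sub_nonneg.2 hx, by ring⟩
  rw [(isSubgradientAt_pinball τ hw).moreau_add_mul_eq hρ, pinball, min_eq_right hw]
  ring

theorem strictConcaveOn_moreau_pinball_div {τ : ℝ} (hτ : 0 < τ) {c ρ x : ℝ} (hc : 0 < c)
    (hρ : 0 < ρ) (hx : ρ / c * τ ≤ x) :
    StrictConcaveOn ℝ (Set.Ici c) fun M => moreau (pinball τ) x (ρ / M) := by
  have hinv : StrictConvexOn ℝ (Set.Ici c) fun M : ℝ => M⁻¹ := by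
    simpa only [zpow_neg_one] using (strictConvexOn_zpow (m := -1) (by decide) (by decide)).subset
      (Set.Ici_subset_Ioi.2 hc) (convex_Ici c)
  have hscaled : StrictConvexOn ℝ (Set.Ici c) fun M : ℝ => ρ * τ ^ 2 / 2 * M⁻¹ := by
    refine ⟨hinv.1, fun M hM N hN hMN p q hp hq hpq => ?_⟩
    have := mul_lt_mul_of_pos_left (hinv.2 hM hN hMN hp hq hpq)
      (by positivity : 0 < ρ * τ ^ 2 / 2)
    simp only [smul_eq_mul] at this ⊢
    linarith
  refine ((concaveOn_const (τ * x) (convex_Ici c)).sub_strictConvexOn hscaled).congr fun M hM => ?_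
  have hM0 : 0 < M := hc.trans_le hM
  have htail : ρ / M * τ ≤ x := le_trans (by gcongr; exact hM) hx
  simp only [Pi.sub_apply, moreau_pinball_of_le τ (div_pos hρ hM0).le htail]
  ring

end Pinball

section ParametricIntegral

variable {E Z : Type*} [MeasurableSpace Z] {μ : Measure Z} {s : Set E} {F : E → Z → ℝ}

section Convex

variable [AddCommGroup E] [Module ℝ E]

theorem convexOn_integral (hs : Convex ℝ s) (hF : ∀ z, ConvexOn ℝ s fun x => F x z)
    (hint : ∀ x ∈ s, Integrable (F x) μ) : ConvexOn ℝ s fun x => ∫ z, F x z ∂μ := by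
  refine ⟨hs, fun x hx y hy p q hp hq hpq => ?_⟩
  have hx' := (hint x hx).const_mul p
  have hy' := (hint y hy).const_mul q
  simp only [smul_eq_mul]
  rw [← integral_const_mul, ← integral_const_mul, ← integral_add hx' hy']
  exact integral_mono (hint _ (hs hx hy hp hq hpq)) (hx'.add hy') fun z =>
    (hF z).2 hx hy hp hq hpq

theorem concaveOn_integral (hs : Convex ℝ s) (hF : ∀ z, ConcaveOn ℝ s fun x => F x z)
    (hint : ∀ x ∈ s, Integrable (F x) μ) : ConcaveOn ℝ s fun x => ∫ z, F x z ∂μ := by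
  rw [← neg_convexOn_iff]
  simpa only [Pi.neg_def, integral_neg] using
    convexOn_integral (F := fun x z => -F x z) hs (fun z => (hF z).neg) fun x hx => (hint x hx).neg

theorem strictConcaveOn_integral (hF : ∀ z, ConcaveOn ℝ s fun x => F x z)
    (hint : ∀ x ∈ s, Integrable (F x) μ) {t : Set Z} (ht : μ t ≠ 0)
    (hFt : ∀ z ∈ t, StrictConcaveOn ℝ s fun x => F x z) :
    StrictConcaveOn ℝ s fun x => ∫ z, F x z ∂μ := by
  obtain ⟨z₀, hz₀⟩ : t.Nonempty := nonempty_of_measure_ne_zero ht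
  have hs : Convex ℝ s := (hFt z₀ hz₀).1
  refine ⟨hs, fun x hx y hy hxy p q hp hq hpq => ?_⟩
  have hsum : Integrable (fun z => p * F x z + q * F y z) μ :=
    ((hint x hx).const_mul p).add ((hint y hy).const_mul q)
  have hmix := hint _ (hs hx hy hp.le hq.le hpq)
  simp only [smul_eq_mul]
  rw [← integral_const_mul, ← integral_const_mul,
    ← integral_add ((hint x hx).const_mul p) ((hint y hy).const_mul q), ← sub_pos,
    ← integral_sub hmix hsum]
  refine (integral_pos_iff_support_of_nonneg ?_ (hmix.sub hsum)).2 ?_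
  · exact fun z => sub_nonneg.2 ((hF z).2 hx hy hp.le hq.le hpq)
  · exact (pos_iff_ne_zero.2 ht).trans_le <| measure_mono fun z hz =>
      (sub_pos.2 ((hFt z hz).2 hx hy hxy hp hq hpq)).ne'

end Convex

theorem lipschitzOnWith_integral [PseudoMetricSpace E] {B : Z → ℝ}
    (hF : ∀ x ∈ s, ∀ y ∈ s, ∀ z, |F x z - F y z| ≤ B z * dist x y)
    (hint : ∀ x ∈ s, Integrable (F x) μ) (hB : Integrable B μ) :
    LipschitzOnWith (∫ z, B z ∂μ).toNNReal (fun x => ∫ z, F x z ∂μ) s := by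
  refine LipschitzOnWith.of_dist_le_mul fun x hx y hy => ?_
  calc dist (∫ z, F x z ∂μ) (∫ z, F y z ∂μ)
      = ‖∫ z, (F x z - F y z) ∂μ‖ := by rw [dist_eq_norm, integral_sub (hint x hx) (hint y hy)]
    _ ≤ ∫ z, B z * dist x y ∂μ :=
        norm_integral_le_of_norm_le (hB.mul_const _) (.of_forall fun z => hF x hx y hy z)
    _ = (∫ z, B z ∂μ) * dist x y := integral_mul_const _ _
    _ ≤ (∫ z, B z ∂μ).toNNReal * dist x y :=
        mul_le_mul_of_nonneg_right (Real.le_coe_toNNReal _) dist_nonneg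

theorem integrable_lipschitzWith_comp [IsFiniteMeasure μ] {L : NNReal} {g : ℝ → ℝ}
    (hg : LipschitzWith L g) {X : Z → ℝ} (hX : Integrable X μ) :
    Integrable (fun z => g (X z)) μ := by
  refine ((hX.norm.const_mul (L : ℝ)).add (integrable_const ‖g 0‖)).mono'
    (hg.continuous.comp_aestronglyMeasurable hX.aestronglyMeasurable) (.of_forall fun z => ?_)
  calc ‖g (X z)‖ ≤ ‖g (X z) - g 0‖ + ‖g 0‖ := by simpa using norm_add_le (g (X z) - g 0) (g 0)
    _ ≤ L * ‖X z‖ + ‖g 0‖ := by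
        gcongr
        simpa using hg.norm_sub_le (X z) 0

end ParametricIntegral

section Gaussian

theorem integrable_id_gaussianReal : Integrable (fun x : ℝ => x) (gaussianReal 0 1) :=
  (memLp_id_gaussianReal 1).integrable le_rfl

theorem integrable_sq_gaussianReal : Integrable (fun x : ℝ => x ^ 2) (gaussianReal 0 1) :=
  (memLp_id_gaussianReal 2).integrable_sq

theorem integral_sq_gaussianReal : ∫ x, x ^ 2 ∂(gaussianReal 0 1) = 1 := by
  have hvar := variance_fun_id_gaussianReal (μ := 0) (v := 1)
  rw [variance_eq_integral (by fun_prop)] at hvar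
  simpa using hvar

theorem gaussianReal_prod_halfSpace_ne_zero (P : Measure ℝ) [SFinite P] [NeZero P] {u : ℝ}
    (hu : u ≠ 0) (k : ℝ) : (gaussianReal 0 1).prod P {z | k ≤ u * z.1 + z.2} ≠ 0 := by
  have : (gaussianReal 0 1).IsOpenPosMeasure :=
    (gaussianReal_absolutelyContinuous' 0 one_ne_zero).isOpenPosMeasure
  have hmeas : MeasurableSet {z : ℝ × ℝ | k ≤ u * z.1 + z.2} :=
    measurableSet_le (by fun_prop) (by fun_prop)
  have hsection : ∀ e : ℝ, 0 < gaussianReal 0 1 {g | k ≤ u * g + e} := fun e => by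
    have hopen : IsOpen {g : ℝ | k < u * g + e} := isOpen_lt (by fun_prop) (by fun_prop)
    refine (hopen.measure_pos _ ⟨(k - e + 1) / u, ?_⟩).trans_le
      (measure_mono (Set.ofPred_subset_ofPred.2 fun _ => le_of_lt))
    rw [Set.mem_ofPred_eq, mul_div_cancel₀ _ hu]
    linarith
  intro hnull
  rw [Measure.prod_apply_symm hmeas,
    lintegral_eq_zero_iff (measurable_measure_prodMk_right hmeas)] at hnull
  obtain ⟨e, he⟩ := hnull.exists
  exact (hsection e).ne' he

end Gaussian

section ExpectedLoss

/-- The expected envelope `E[e_f(u g + ε − β; ρ)]` for `(g, ε) ∼ μ`, as a function of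
`p = (β, u, ρ)`. -/
def expectedMoreau (f : ℝ → ℝ) (μ : Measure (ℝ × ℝ)) (p : ℝ × ℝ × ℝ) : ℝ :=
  ∫ z, moreau f (p.2.1 * z.1 + z.2 - p.1) p.2.2 ∂μ

variable {f : ℝ → ℝ} {L : NNReal} {μ : Measure (ℝ × ℝ)} [IsFiniteMeasure μ]

theorem integrable_moreau_affine (hf : ConvexOn ℝ Set.univ f) (hL : LipschitzWith L f)
    (hfst : Integrable (fun z => z.1) μ) (hsnd : Integrable (fun z => z.2) μ) (β u : ℝ) {ρ : ℝ}
    (hρ : 0 ≤ ρ) : Integrable (fun z => moreau f (u * z.1 + z.2 - β) ρ) μ := by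
  have hlip : LipschitzWith L fun x => moreau f x ρ := LipschitzWith.of_dist_le_mul fun x y => by
    simpa [Real.dist_eq] using abs_moreau_sub_moreau_le hf hL hρ hρ x y
  exact integrable_lipschitzWith_comp hlip (((hfst.const_mul u).add hsnd).sub (integrable_const β))

theorem convexOn_expectedMoreau (hf : ConvexOn ℝ Set.univ f) (hL : LipschitzWith L f)
    (hfst : Integrable (fun z => z.1) μ) (hsnd : Integrable (fun z => z.2) μ) :
    ConvexOn ℝ {p : ℝ × ℝ × ℝ | 0 ≤ p.2.2} (expectedMoreau f μ) := by
  have hconvex : Convex ℝ {p : ℝ × ℝ × ℝ | 0 ≤ p.2.2} :=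
    convex_halfSpace_ge ((LinearMap.snd ℝ ℝ ℝ).comp (LinearMap.snd ℝ ℝ (ℝ × ℝ))).isLinear 0
  refine convexOn_integral hconvex (fun z => ⟨hconvex, fun p hp q hq a b ha hb hab => ?_⟩)
    fun p hp => integrable_moreau_affine hf hL hfst hsnd _ _ hp
  have haffine : (a • p + b • q).2.1 * z.1 + z.2 - (a • p + b • q).1 =
      a * (p.2.1 * z.1 + z.2 - p.1) + b * (q.2.1 * z.1 + z.2 - q.1) := by
    simp only [Prod.fst_add, Prod.snd_add, Prod.smul_fst, Prod.smul_snd, smul_eq_mul]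
    linear_combination (-z.2) * hab
  simp only [haffine]
  exact (convexOn_moreau hf).2 (x := (p.2.1 * z.1 + z.2 - p.1, p.2.2)) hp
    (y := (q.2.1 * z.1 + z.2 - q.1, q.2.2)) hq ha hb hab

theorem continuousOn_expectedMoreau (hf : ConvexOn ℝ Set.univ f) (hL : LipschitzWith L f)
    (hfst : Integrable (fun z => z.1) μ) (hsnd : Integrable (fun z => z.2) μ) :
    ContinuousOn (expectedMoreau f μ) {p | 0 ≤ p.2.2} := by
  refine (lipschitzOnWith_integral (B := fun z => L * (|z.1| + 1) + L ^ 2 / 2)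
    (fun p hp q hq z => ?_) (fun p hp => integrable_moreau_affine hf hL hfst hsnd _ _ hp)
    (((hfst.abs.add (integrable_const _)).const_mul _).add (integrable_const _))).continuousOn
  obtain ⟨hβ, hu, hρ⟩ : |p.1 - q.1| ≤ dist p q ∧ |p.2.1 - q.2.1| ≤ dist p q ∧
      |p.2.2 - q.2.2| ≤ dist p q := by
    simp [Prod.dist_eq, Real.dist_eq]
  have hx : |p.2.1 * z.1 + z.2 - p.1 - (q.2.1 * z.1 + z.2 - q.1)| ≤ dist p q * |z.1| + dist p q :=
    calc |p.2.1 * z.1 + z.2 - p.1 - (q.2.1 * z.1 + z.2 - q.1)|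
        = |(p.2.1 - q.2.1) * z.1 - (p.1 - q.1)| := by ring_nf
      _ ≤ |p.2.1 - q.2.1| * |z.1| + |p.1 - q.1| := by rw [← abs_mul]; exact abs_sub _ _
      _ ≤ dist p q * |z.1| + dist p q := by gcongr
  calc |moreau f (p.2.1 * z.1 + z.2 - p.1) p.2.2 - moreau f (q.2.1 * z.1 + z.2 - q.1) q.2.2|
      ≤ L * (dist p q * |z.1| + dist p q) + L ^ 2 / 2 * dist p q :=
        (abs_moreau_sub_moreau_le hf hL hp hq _ _).trans (by gcongr)
    _ = (L * (|z.1| + 1) + L ^ 2 / 2) * dist p q := by ring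

theorem expectedMoreau_le_expectedMoreau_zero (hf : ConvexOn ℝ Set.univ f) (hL : LipschitzWith L f)
    (hfst : Integrable (fun z => z.1) μ) (hsnd : Integrable (fun z => z.2) μ) (β u : ℝ) {ρ : ℝ}
    (hρ : 0 ≤ ρ) : expectedMoreau f μ (β, u, ρ) ≤ expectedMoreau f μ (β, u, 0) :=
  integral_mono (integrable_moreau_affine hf hL hfst hsnd _ _ hρ)
    (integrable_moreau_affine hf hL hfst hsnd _ _ le_rfl) fun z => by
      simpa only [moreau_zero] using moreau_le_self hf hρ _

theorem concaveOn_expectedMoreau_div (hf : ConvexOn ℝ Set.univ f) (hL : LipschitzWith L f)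
    (hfst : Integrable (fun z => z.1) μ) (hsnd : Integrable (fun z => z.2) μ) (β u : ℝ) {ρ : ℝ}
    (hρ : 0 ≤ ρ) : ConcaveOn ℝ (Set.Ioi 0) fun M => expectedMoreau f μ (β, u, ρ / M) := by
  simp only [expectedMoreau]
  exact concaveOn_integral (convex_Ioi 0) (fun _ => concaveOn_moreau_div hf hρ _) fun _ hM =>
    integrable_moreau_affine hf hL hfst hsnd _ _
      (div_nonneg hρ (Set.mem_Ioi.1 hM).le)

theorem strictConcaveOn_expectedMoreau_pinball_div {τ : ℝ} (hτ : 0 < τ)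
    (hfst : Integrable (fun z => z.1) μ) (hsnd : Integrable (fun z => z.2) μ) (β u : ℝ) {ρ c : ℝ}
    (hρ : 0 < ρ) (hc : 0 < c) (hμ : μ {z | ρ / c * τ ≤ u * z.1 + z.2 - β} ≠ 0) :
    StrictConcaveOn ℝ (Set.Ici c) fun M => expectedMoreau (pinball τ) μ (β, u, ρ / M) := by
  simp only [expectedMoreau]
  exact strictConcaveOn_integral
    (fun _ => (concaveOn_moreau_div (convexOn_pinball τ) hρ.le _).subset (Set.Ici_subset_Ioi.2 hc)
      (convex_Ici c))
    (fun _ hM => integrable_moreau_affine (convexOn_pinball τ) (lipschitzWith_pinball τ) hfst hsnd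
      _ _ (div_nonneg hρ.le (hc.trans_le (Set.mem_Ici.1 hM)).le))
    hμ fun _ hz => strictConcaveOn_moreau_pinball_div hτ hc hρ hz

end ExpectedLoss

section CompensatedEnvelope

/-- The envelope `e_ν(M u h / ρ + b; u / ρ)` minus the quadratic term `M² u h² / (2 ρ)`, whose
expectation is the deterministic term `M² u / (2 ρ)` of the asymptotic objective.  The infimum
defining the envelope then becomes one over functions affine in `(M, ρ)`. -/
def compensatedMoreau (ν : ℝ → ℝ) (u M ρ h b : ℝ) : ℝ :=
  moreau ν (M * u / ρ * h + b) (u / ρ) - M ^ 2 * u / (2 * ρ) * h ^ 2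

variable {ν : ℝ → ℝ}

theorem compensatedMoreau_zero (ν : ℝ → ℝ) (M ρ h b : ℝ) : compensatedMoreau ν 0 M ρ h b = ν b := by
  simp [compensatedMoreau, moreau_zero]

theorem isGLB_compensatedMoreau (hν : ConvexOn ℝ Set.univ ν) {u ρ : ℝ} (hu : 0 < u) (hρ : 0 < ρ)
    (M h b : ℝ) :
    IsGLB (Set.range fun v => M * (h * (b - v)) + ρ * ((b - v) ^ 2 / (2 * u)) + ν v)
      (compensatedMoreau ν u M ρ h b) := by
  have hshift : (fun v => M * (h * (b - v)) + ρ * ((b - v) ^ 2 / (2 * u)) + ν v) =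
      OrderIso.addRight (-(M ^ 2 * u / (2 * ρ) * h ^ 2)) ∘
        fun v => (M * u / ρ * h + b - v) ^ 2 / (2 * (u / ρ)) + ν v := by
    funext v
    simp only [Function.comp_apply, OrderIso.addRight_apply]
    field_simp
    ring
  rw [hshift, Set.range_comp, compensatedMoreau, sub_eq_add_neg]
  exact (OrderIso.addRight _).isGLB_image'.2 (isGLB_moreau hν (div_pos hu hρ) _)

theorem compensatedMoreau_le (hν : ConvexOn ℝ Set.univ ν) {u ρ : ℝ} (hu : 0 ≤ u) (hρ : 0 < ρ)
    (M h b : ℝ) : compensatedMoreau ν u M ρ h b ≤ ν b := by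
  rcases hu.eq_or_lt with rfl | hu
  · exact (compensatedMoreau_zero ν M ρ h b).le
  · simpa using (isGLB_compensatedMoreau hν hu hρ M h b).1 ⟨b, rfl⟩

theorem convex_halfPlane_snd_pos : Convex ℝ {q : ℝ × ℝ | 0 < q.2} :=
  convex_halfSpace_gt (LinearMap.snd ℝ ℝ ℝ).isLinear 0

theorem concaveOn_compensatedMoreau (hν : ConvexOn ℝ Set.univ ν) {u : ℝ} (hu : 0 ≤ u) (h b : ℝ) :
    ConcaveOn ℝ {q : ℝ × ℝ | 0 < q.2} fun q => compensatedMoreau ν u q.1 q.2 h b := by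
  rcases hu.eq_or_lt with rfl | hu
  · simpa only [compensatedMoreau_zero] using concaveOn_const _ convex_halfPlane_snd_pos
  · refine concaveOn_of_isGLB
      (g := fun v q => q.1 * (h * (b - v)) + q.2 * ((b - v) ^ 2 / (2 * u)) + ν v)
      convex_halfPlane_snd_pos (fun v => ?_) fun q hq => isGLB_compensatedMoreau hν hu hq q.1 h b
    exact (((LinearMap.mulRight ℝ _).comp (LinearMap.fst ℝ ℝ ℝ) +
      (LinearMap.mulRight ℝ _).comp (LinearMap.snd ℝ ℝ ℝ)).concaveOn
        convex_halfPlane_snd_pos).add_const _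

theorem convexOn_compensatedMoreau (hν : ConvexOn ℝ Set.univ ν) {ρ : ℝ} (hρ : 0 < ρ)
    (M h b : ℝ) : ConvexOn ℝ (Set.Ici 0) fun u => compensatedMoreau ν u M ρ h b := by
  have hmoreau : ConvexOn ℝ (Set.Ici 0) fun u : ℝ => moreau ν (M * u / ρ * h + b) (u / ρ) := by
    refine ⟨convex_Ici 0, fun u hu v hv p q hp hq hpq => ?_⟩
    have hline : M * (p • u + q • v) / ρ * h + b =
        p * (M * u / ρ * h + b) + q * (M * v / ρ * h + b) := by
      simp only [smul_eq_mul]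
      linear_combination (-b) * hpq
    have hscale : (p • u + q • v) / ρ = p * (u / ρ) + q * (v / ρ) := by
      simp only [smul_eq_mul]
      ring
    simp only [hline, hscale]
    exact (convexOn_moreau hν).2 (x := (M * u / ρ * h + b, u / ρ)) (div_nonneg hu hρ.le)
      (y := (M * v / ρ * h + b, v / ρ)) (div_nonneg hv hρ.le) hp hq hpq
  refine (hmoreau.sub ((LinearMap.mulLeft ℝ (M ^ 2 / (2 * ρ) * h ^ 2)).concaveOn
    (convex_Ici 0))).congr fun u _ => ?_
  simp only [compensatedMoreau, Pi.sub_apply, LinearMap.mulLeft_apply]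
  ring

theorem moreauConj_eq_sub_compensatedMoreau (hν : ConvexOn ℝ Set.univ ν) {u ρ : ℝ} (hu : 0 < u)
    (hρ : 0 < ρ) (M h b : ℝ) :
    moreauConj ν (M * h + ρ / u * b) (ρ / u) =
      M * (h * b) + ρ / (2 * u) * b ^ 2 - compensatedMoreau ν u M ρ h b := by
  have hpoint : (M * h + ρ / u * b) / (ρ / u) = M * u / ρ * h + b := by field_simp
  rw [moreauConj_eq hν (div_pos hρ hu), one_div_div, hpoint, compensatedMoreau]
  field_simp
  ring

end CompensatedEnvelope

section ExpectedCompensatedEnvelope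

/-- Integrability of every envelope `e_ν(c h + γ b; ρ)`, `ρ ≥ 0`, for
`(h, b) ∼ N(0,1) ⊗ P_β`. -/
def EnvelopeIntegrable (γ : ℝ) (Pβ : Measure ℝ) (ν : ℝ → ℝ) : Prop :=
  ∀ c ρ : ℝ, 0 ≤ ρ →
    Integrable (fun z : ℝ × ℝ => moreau ν (c * z.1 + γ * z.2) ρ) ((gaussianReal 0 1).prod Pβ)

/-- The expectation of `compensatedMoreau` at `(h, γ b)` for `(h, b) ∼ N(0,1) ⊗ P_β`. -/
def expectedCompensatedMoreau (γ : ℝ) (Pβ : Measure ℝ) (ν : ℝ → ℝ) (u M ρ : ℝ) : ℝ :=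
  ∫ z, compensatedMoreau ν u M ρ z.1 (γ * z.2) ∂((gaussianReal 0 1).prod Pβ)

variable {γ : ℝ} {Pβ : Measure ℝ} {ν : ℝ → ℝ}

theorem exists_forall_integral_moreauConj_add_le (hconj : ConjDerivAssumption γ Pβ ν) {M N C : ℝ}
    (hM : 0 < M) (hMN : M < N) (hC : 0 < C) :
    ∃ δ > 0, ∀ σ ∈ Set.Ioc 0 C,
      (∫ z, moreauConj ν (M * z.1 + σ * γ * z.2) σ ∂((gaussianReal 0 1).prod Pβ)) + δ ≤
        ∫ z, moreauConj ν (N * z.1 + σ * γ * z.2) σ ∂((gaussianReal 0 1).prod Pβ) := by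
  obtain ⟨D1, D2, hderiv, hcurv⟩ := hconj
  obtain ⟨m, hm, hmD2⟩ := hcurv (Set.Icc M N) isCompact_Icc (fun c hc => hM.trans_le hc.1) C hC
  refine ⟨M * m * (N - M), mul_pos (mul_pos hM hm) (sub_pos.2 hMN), fun σ hσ => ?_⟩
  have hD := (hderiv σ hσ.1).2.2
  rw [← le_sub_iff_add_le']
  refine (convex_Icc M N).mul_sub_le_image_sub_of_le_deriv
    (f := fun c => ∫ z, moreauConj ν (c * z.1 + σ * γ * z.2) σ ∂((gaussianReal 0 1).prod Pβ))
    (fun c _ => (hD c).1.continuousAt.continuousWithinAt)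
    (fun c _ => (hD c).1.differentiableAt.differentiableWithinAt) (fun c hc => ?_)
    M (Set.left_mem_Icc.2 hMN.le) N (Set.right_mem_Icc.2 hMN.le) hMN.le
  have hc' : c ∈ Set.Icc M N := interior_subset hc
  rw [(hD c).1.deriv, (hD c).2]
  exact mul_le_mul hc'.1 (hmD2 c hc' σ hσ) hm.le (hM.le.trans hc'.1)

variable [IsProbabilityMeasure Pβ]

namespace EnvelopeIntegrable

theorem integrable_compensatedMoreau (hint : EnvelopeIntegrable γ Pβ ν) {u ρ : ℝ} (hu : 0 ≤ u)
    (hρ : 0 < ρ) (M : ℝ) : Integrable (fun z : ℝ × ℝ => compensatedMoreau ν u M ρ z.1 (γ * z.2))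
      ((gaussianReal 0 1).prod Pβ) :=
  (hint (M * u / ρ) (u / ρ) (div_nonneg hu hρ.le)).sub
    ((integrable_sq_gaussianReal.comp_fst Pβ).const_mul _)

theorem expectedCompensatedMoreau_eq (hint : EnvelopeIntegrable γ Pβ ν) {u ρ : ℝ} (hu : 0 ≤ u)
    (hρ : 0 < ρ) (M : ℝ) : expectedCompensatedMoreau γ Pβ ν u M ρ =
      (∫ z, moreau ν (M * u / ρ * z.1 + γ * z.2) (u / ρ) ∂((gaussianReal 0 1).prod Pβ)) -
        M ^ 2 * u / (2 * ρ) := by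
  simp only [expectedCompensatedMoreau, compensatedMoreau]
  rw [integral_sub (hint (M * u / ρ) (u / ρ) (div_nonneg hu hρ.le))
    ((integrable_sq_gaussianReal.comp_fst Pβ).const_mul _), integral_const_mul,
    integral_fun_fst fun x : ℝ => x ^ 2, integral_sq_gaussianReal]
  simp

theorem expectedCompensatedMoreau_le (hint : EnvelopeIntegrable γ Pβ ν)
    (hν : ConvexOn ℝ Set.univ ν) {u ρ : ℝ} (hu : 0 ≤ u) (hρ : 0 < ρ) (M : ℝ) :
    expectedCompensatedMoreau γ Pβ ν u M ρ ≤ ∫ z, ν (γ * z.2) ∂((gaussianReal 0 1).prod Pβ) := by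
  have hνint : Integrable (fun z : ℝ × ℝ => ν (γ * z.2)) ((gaussianReal 0 1).prod Pβ) := by
    simpa [moreau_zero] using hint 0 0 le_rfl
  exact integral_mono (hint.integrable_compensatedMoreau hu hρ M) hνint fun z =>
    compensatedMoreau_le hν hu hρ M _ _

theorem concaveOn_expectedCompensatedMoreau (hint : EnvelopeIntegrable γ Pβ ν)
    (hν : ConvexOn ℝ Set.univ ν) {u : ℝ} (hu : 0 ≤ u) :
    ConcaveOn ℝ {q : ℝ × ℝ | 0 < q.2} fun q => expectedCompensatedMoreau γ Pβ ν u q.1 q.2 :=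
  concaveOn_integral convex_halfPlane_snd_pos (fun _ => concaveOn_compensatedMoreau hν hu _ _)
    fun _ hq => hint.integrable_compensatedMoreau hu hq _

theorem convexOn_expectedCompensatedMoreau (hint : EnvelopeIntegrable γ Pβ ν)
    (hν : ConvexOn ℝ Set.univ ν) {ρ : ℝ} (hρ : 0 < ρ) (M : ℝ) :
    ConvexOn ℝ (Set.Ici 0) fun u => expectedCompensatedMoreau γ Pβ ν u M ρ :=
  convexOn_integral (convex_Ici 0) (fun _ => convexOn_compensatedMoreau hν hρ M _ _)
    fun _ hu => hint.integrable_compensatedMoreau hu hρ M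

theorem integral_moreauConj_eq (hint : EnvelopeIntegrable γ Pβ ν) (hν : ConvexOn ℝ Set.univ ν)
    (hPβ : MemLp (fun x => x) 2 Pβ) {u ρ : ℝ} (hu : 0 < u) (hρ : 0 < ρ) (M : ℝ) :
    ∫ z, moreauConj ν (M * z.1 + ρ / u * γ * z.2) (ρ / u) ∂((gaussianReal 0 1).prod Pβ) =
      ρ / (2 * u) * (∫ z, (γ * z.2) ^ 2 ∂((gaussianReal 0 1).prod Pβ)) -
        expectedCompensatedMoreau γ Pβ ν u M ρ := by
  have hcross : Integrable (fun z : ℝ × ℝ => z.1 * (γ * z.2)) ((gaussianReal 0 1).prod Pβ) :=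
    integrable_id_gaussianReal.mul_prod ((hPβ.integrable one_le_two).const_mul γ)
  have hsq : Integrable (fun z : ℝ × ℝ => (γ * z.2) ^ 2) ((gaussianReal 0 1).prod Pβ) :=
    (hPβ.const_mul γ).integrable_sq.comp_snd (gaussianReal 0 1)
  have hcross_zero : ∫ z, z.1 * (γ * z.2) ∂((gaussianReal 0 1).prod Pβ) = 0 := by
    rw [integral_prod_mul (fun x : ℝ => x) fun x : ℝ => γ * x, integral_id_gaussianReal, zero_mul]
  simp only [mul_assoc, moreauConj_eq_sub_compensatedMoreau hν hu hρ]
  have hquad : Integrable (fun z : ℝ × ℝ => M * (z.1 * (γ * z.2)) + ρ / (2 * u) * (γ * z.2) ^ 2)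
      ((gaussianReal 0 1).prod Pβ) := (hcross.const_mul _).add (hsq.const_mul _)
  rw [integral_sub hquad (hint.integrable_compensatedMoreau hu.le hρ M),
    integral_add (hcross.const_mul _) (hsq.const_mul _), integral_const_mul, integral_const_mul,
    hcross_zero, mul_zero, zero_add, expectedCompensatedMoreau]

end EnvelopeIntegrable

theorem EnvelopeIntegrable.exists_forall_expectedCompensatedMoreau_add_le
    (hint : EnvelopeIntegrable γ Pβ ν) (hν : ConvexOn ℝ Set.univ ν)
    (hPβ : MemLp (fun x => x) 2 Pβ) (hconj : ConjDerivAssumption γ Pβ ν) {u M N C : ℝ}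
    (hu : 0 < u) (hM : 0 < M) (hMN : M < N) (hC : 0 < C) :
    ∃ δ > 0, ∀ ρ ∈ Set.Ioc 0 C, expectedCompensatedMoreau γ Pβ ν u N ρ + δ ≤
      expectedCompensatedMoreau γ Pβ ν u M ρ := by
  obtain ⟨δ, hδ, hgap⟩ := exists_forall_integral_moreauConj_add_le hconj hM hMN (div_pos hC hu)
  refine ⟨δ, hδ, fun ρ hρ => ?_⟩
  have hgap_ρ := hgap (ρ / u) ⟨div_pos hρ.1 hu, div_le_div_of_nonneg_right hρ.2 hu.le⟩
  rw [hint.integral_moreauConj_eq hν hPβ hu hρ.1, hint.integral_moreauConj_eq hν hPβ hu hρ.1]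
    at hgap_ρ
  linarith

end ExpectedCompensatedEnvelope

section Objective

/-- The asymptotic objective as a payoff between `p = (β₀, M_u, ρ₁)`, which minimizes, and
`q = (M_η, ρ₂)`, which maximizes. -/
def asymPayoff (τ γ : ℝ) (Pε Pβ : Measure ℝ) (ν : ℝ → ℝ) (p : ℝ × ℝ × ℝ) (q : ℝ × ℝ) : ℝ :=
  asymObj τ γ Pε Pβ ν p.1 p.2.1 p.2.2 q.1 q.2

variable {τ γ : ℝ} {Pε Pβ : Measure ℝ} {ν : ℝ → ℝ}

theorem continuousOn_asymPayoff [IsProbabilityMeasure Pε] (hPε : Integrable (fun x => x) Pε)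
    (hνcont : ContinuousOn (fun q : ℝ × ℝ => ∫ z, moreau ν (q.1 * z.1 + γ * z.2) q.2
      ∂((gaussianReal 0 1).prod Pβ)) (Set.univ ×ˢ Set.Ici 0)) :
    ContinuousOn (Function.uncurry (asymPayoff τ γ Pε Pβ ν))
      ((Set.univ ×ˢ Set.Ici 0 ×ˢ Set.Ici 0) ×ˢ (Set.Ioi 0 ×ˢ Set.Ioi 0)) := by
  set D : Set ((ℝ × ℝ × ℝ) × ℝ × ℝ) :=
    (Set.univ ×ˢ Set.Ici 0 ×ˢ Set.Ici 0) ×ˢ (Set.Ioi 0 ×ˢ Set.Ioi 0)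
  have hM : ∀ r ∈ D, r.2.1 ≠ 0 := fun r hr => (Set.mem_Ioi.1 hr.2.1).ne'
  have hρ : ∀ r ∈ D, r.2.2 ≠ 0 := fun r hr => (Set.mem_Ioi.1 hr.2.2).ne'
  have hloss := (continuousOn_expectedMoreau (convexOn_pinball τ) (lipschitzWith_pinball τ)
    (integrable_id_gaussianReal.comp_fst Pε) (hPε.comp_snd (gaussianReal 0 1))).comp
    (f := fun r : (ℝ × ℝ × ℝ) × ℝ × ℝ => (r.1.1, r.1.2.1, r.1.2.2 / r.2.1)) (s := D)
    (by fun_prop (disch := assumption)) fun r (hr : r ∈ D) =>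
      div_nonneg (Set.mem_Ici.1 hr.1.2.2) (Set.mem_Ioi.1 hr.2.1).le
  have hpenalty := hνcont.comp
    (f := fun r : (ℝ × ℝ × ℝ) × ℝ × ℝ => (r.2.1 * r.1.2.1 / r.2.2, r.1.2.1 / r.2.2)) (s := D)
    (by fun_prop (disch := assumption)) fun r (hr : r ∈ D) =>
      ⟨trivial, div_nonneg (Set.mem_Ici.1 hr.1.2.1) (Set.mem_Ioi.1 hr.2.2).le⟩
  have hquad : ContinuousOn
      (fun r : (ℝ × ℝ × ℝ) × ℝ × ℝ => r.2.1 ^ 2 * r.1.2.1 * γ / (2 * r.2.2)) D :=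
    ContinuousOn.div (by fun_prop) (by fun_prop) fun r hr => mul_ne_zero two_ne_zero (hρ r hr)
  exact (((hloss.sub hquad).add (hpenalty.const_mul γ)).add
    (by fun_prop : Continuous fun r : (ℝ × ℝ × ℝ) × ℝ × ℝ => r.2.1 * r.1.2.2 / 2).continuousOn).sub
    (by fun_prop : Continuous fun r : (ℝ × ℝ × ℝ) × ℝ × ℝ => r.1.2.1 * r.2.2 / 2).continuousOn

variable [IsProbabilityMeasure Pβ]

theorem asymPayoff_eq (hint : EnvelopeIntegrable γ Pβ ν) {p : ℝ × ℝ × ℝ} (hp : 0 ≤ p.2.1)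
    {q : ℝ × ℝ} (hq : 0 < q.2) : asymPayoff τ γ Pε Pβ ν p q =
      expectedMoreau (pinball τ) ((gaussianReal 0 1).prod Pε) (p.1, p.2.1, p.2.2 / q.1) +
        (γ * expectedCompensatedMoreau γ Pβ ν p.2.1 q.1 q.2 +
          (q.1 * p.2.2 / 2 - p.2.1 * q.2 / 2)) := by
  rw [hint.expectedCompensatedMoreau_eq hp hq, asymPayoff, asymObj, expectedMoreau]
  ring

theorem concaveOn_expectedCompensatedMoreau_add_linear (hγ : 0 ≤ γ) (hν : ConvexOn ℝ Set.univ ν)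
    (hint : EnvelopeIntegrable γ Pβ ν) {u : ℝ} (hu : 0 ≤ u) (ρ₁ : ℝ) :
    ConcaveOn ℝ {q : ℝ × ℝ | 0 < q.2} fun q =>
      γ * expectedCompensatedMoreau γ Pβ ν u q.1 q.2 + (q.1 * ρ₁ / 2 - u * q.2 / 2) := by
  refine (((hint.concaveOn_expectedCompensatedMoreau hν hu).smul hγ).add
    ((((ρ₁ / 2) • LinearMap.fst ℝ ℝ ℝ) - ((u / 2) • LinearMap.snd ℝ ℝ ℝ)).concaveOn
      convex_halfPlane_snd_pos)).congr fun q _ => ?_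
  simp only [Pi.add_apply, LinearMap.sub_apply, LinearMap.smul_apply, LinearMap.fst_apply,
    LinearMap.snd_apply, smul_eq_mul, add_right_inj]
  ring

variable [IsProbabilityMeasure Pε]

theorem convexOn_asymPayoff (hγ : 0 ≤ γ) (hPε : Integrable (fun x => x) Pε)
    (hν : ConvexOn ℝ Set.univ ν) (hint : EnvelopeIntegrable γ Pβ ν) {q : ℝ × ℝ} (hq₁ : 0 ≤ q.1)
    (hq₂ : 0 < q.2) : ConvexOn ℝ (Set.univ ×ˢ Set.Ici 0 ×ˢ Set.Ici 0) fun p =>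
      asymPayoff τ γ Pε Pβ ν p q := by
  have hconvex : Convex ℝ ((Set.univ : Set ℝ) ×ˢ Set.Ici (0 : ℝ) ×ˢ Set.Ici (0 : ℝ)) :=
    convex_univ.prod ((convex_Ici 0).prod (convex_Ici 0))
  have hloss := ((convexOn_expectedMoreau (convexOn_pinball τ) (lipschitzWith_pinball τ)
    (integrable_id_gaussianReal.comp_fst Pε) (hPε.comp_snd (gaussianReal 0 1))).comp_linearMap
      (LinearMap.id.prodMap (LinearMap.id.prodMap (LinearMap.mulRight ℝ q.1⁻¹)))).subset
    (fun p hp => mul_nonneg hp.2.2 (inv_nonneg.2 hq₁)) hconvex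
  have hpenalty := ((hint.convexOn_expectedCompensatedMoreau hν hq₂ q.1).comp_linearMap
    ((LinearMap.fst ℝ ℝ ℝ).comp (LinearMap.snd ℝ ℝ (ℝ × ℝ)))).subset (fun p hp => hp.2.1) hconvex
  have hlinear := (((q.1 / 2) • (LinearMap.snd ℝ ℝ ℝ).comp (LinearMap.snd ℝ ℝ (ℝ × ℝ))) -
    ((q.2 / 2) • (LinearMap.fst ℝ ℝ ℝ).comp (LinearMap.snd ℝ ℝ (ℝ × ℝ)))).convexOn hconvex
  refine (hloss.add ((hpenalty.smul hγ).add hlinear)).congr fun p hp => ?_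
  simp only [asymPayoff_eq hint hp.2.1 hq₂, div_eq_mul_inv, Pi.add_apply, Function.comp_apply,
    LinearMap.coe_comp, LinearMap.coe_fst, LinearMap.coe_snd, LinearMap.prodMap_apply,
    LinearMap.id_coe, id_eq, LinearMap.mulRight_apply, LinearMap.sub_apply, LinearMap.smul_apply,
    smul_eq_mul, add_right_inj]
  ring

theorem concaveOn_asymPayoff (hγ : 0 ≤ γ) (hPε : Integrable (fun x => x) Pε)
    (hν : ConvexOn ℝ Set.univ ν) (hint : EnvelopeIntegrable γ Pβ ν) {p : ℝ × ℝ × ℝ}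
    (hp₁ : 0 ≤ p.2.1) (hp₂ : 0 ≤ p.2.2) :
    ConcaveOn ℝ (Set.Ioi 0 ×ˢ Set.Ioi 0) (asymPayoff τ γ Pε Pβ ν p) := by
  have hconvex : Convex ℝ (Set.Ioi (0 : ℝ) ×ˢ Set.Ioi (0 : ℝ)) := (convex_Ioi 0).prod (convex_Ioi 0)
  have hloss := ((concaveOn_expectedMoreau_div (convexOn_pinball τ) (lipschitzWith_pinball τ)
    (integrable_id_gaussianReal.comp_fst Pε) (hPε.comp_snd (gaussianReal 0 1)) p.1 p.2.1
    hp₂).comp_linearMap (LinearMap.fst ℝ ℝ ℝ)).subset (fun q hq => hq.1) hconvex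
  exact (hloss.add ((concaveOn_expectedCompensatedMoreau_add_linear hγ hν hint hp₁ p.2.2).subset
    (fun q hq => hq.2) hconvex)).congr fun q hq => (asymPayoff_eq hint hp₁ hq.2).symm

theorem bddAbove_asymPayoff (hγ : 0 ≤ γ) (hPε : Integrable (fun x => x) Pε)
    (hν : ConvexOn ℝ Set.univ ν) (hint : EnvelopeIntegrable γ Pβ ν) {p : ℝ × ℝ × ℝ}
    (hp₁ : 0 ≤ p.2.1) (hp₂ : 0 ≤ p.2.2) (C : ℝ) :
    BddAbove (asymPayoff τ γ Pε Pβ ν p '' (Set.Ioc 0 C ×ˢ Set.Ioi 0)) := by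
  refine ⟨expectedMoreau (pinball τ) ((gaussianReal 0 1).prod Pε) (p.1, p.2.1, 0) +
    (γ * (∫ z, ν (γ * z.2) ∂((gaussianReal 0 1).prod Pβ)) + C * p.2.2 / 2),
    Set.forall_mem_image.2 fun q ⟨hM, hρ⟩ => ?_⟩
  have hloss := expectedMoreau_le_expectedMoreau_zero (convexOn_pinball τ) (lipschitzWith_pinball τ)
    (integrable_id_gaussianReal.comp_fst Pε) (hPε.comp_snd (gaussianReal 0 1)) p.1 p.2.1
    (div_nonneg hp₂ hM.1.le)
  have hpenalty := mul_le_mul_of_nonneg_left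
    (hint.expectedCompensatedMoreau_le hν hp₁ hρ q.1) hγ
  have hlinear : q.1 * p.2.2 ≤ C * p.2.2 := mul_le_mul_of_nonneg_right hM.2 hp₂
  have hcost : 0 ≤ p.2.1 * q.2 := mul_nonneg hp₁ (le_of_lt hρ)
  rw [asymPayoff_eq hint hp₁ hρ]
  linarith

theorem isConvexConcaveOn_asymPayoff (hγ : 0 ≤ γ) (hPε : Integrable (fun x => x) Pε)
    (hν : ConvexOn ℝ Set.univ ν) (hint : EnvelopeIntegrable γ Pβ ν)
    (hνcont : ContinuousOn (fun q : ℝ × ℝ => ∫ z, moreau ν (q.1 * z.1 + γ * z.2) q.2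
      ∂((gaussianReal 0 1).prod Pβ)) (Set.univ ×ˢ Set.Ici 0))
    (Cβ0 Cu C₁ Cη C₂ : ℝ) {cη : ℝ} (hcη : 0 < cη) :
    IsConvexConcaveOn (asymBox Cβ0 Cu C₁) (Set.Icc cη Cη ×ˢ Set.Ioc 0 C₂)
      (asymPayoff τ γ Pε Pβ ν) := by
  have hXD : asymBox Cβ0 Cu C₁ ⊆ Set.univ ×ˢ Set.Ici 0 ×ˢ Set.Ici 0 :=
    Set.prod_mono (Set.subset_univ _) <|
      Set.prod_mono Set.Icc_subset_Ici_self Set.Icc_subset_Ici_self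
  have hYQ : Set.Icc cη Cη ×ˢ Set.Ioc 0 C₂ ⊆ Set.Ioi 0 ×ˢ Set.Ioi 0 :=
    Set.prod_mono (fun _ h => hcη.trans_le h.1) Set.Ioc_subset_Ioi_self
  have hX : Convex ℝ (asymBox Cβ0 Cu C₁) :=
    (convex_Icc _ _).prod ((convex_Icc _ _).prod (convex_Icc _ _))
  have hY : Convex ℝ (Set.Icc cη Cη ×ˢ Set.Ioc 0 C₂) := (convex_Icc _ _).prod (convex_Ioc _ _)
  have hcont := (continuousOn_asymPayoff (τ := τ) hPε hνcont).mono (Set.prod_mono hXD hYQ)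
  refine ⟨fun q hq => ?_, fun q hq => ?_, fun p hp => ?_, fun p hp => ?_, fun p hp => ?_⟩
  · exact (convexOn_asymPayoff hγ hPε hν hint (le_of_lt (hYQ hq).1) (hYQ hq).2).subset hXD hX
  · exact (hcont.uncurry_right q hq).lowerSemicontinuousOn
  · exact (concaveOn_asymPayoff hγ hPε hν hint (hXD hp).2.1 (hXD hp).2.2).subset hYQ hY
  · exact (hcont.uncurry_left p hp).upperSemicontinuousOn
  · have hIcc : Set.Icc cη Cη ⊆ Set.Ioc 0 Cη := fun _ h => ⟨hcη.trans_le h.1, h.2⟩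
    exact (bddAbove_asymPayoff hγ hPε hν hint (hXD hp).2.1 (hXD hp).2.2 Cη).mono <|
      Set.image_mono <| Set.prod_mono hIcc Set.Ioc_subset_Ioi_self

end Objective

section Uniqueness

variable {τ γ : ℝ} {Pε Pβ : Measure ℝ} {ν : ℝ → ℝ} [IsProbabilityMeasure Pε]
  [IsProbabilityMeasure Pβ]

theorem strictConcaveOn_supOver_asymPayoff (hτ : 0 < τ) (hγ : 0 ≤ γ)
    (hPε : Integrable (fun x => x) Pε) (hν : ConvexOn ℝ Set.univ ν)
    (hint : EnvelopeIntegrable γ Pβ ν) {p : ℝ × ℝ × ℝ} (hp₁ : 0 < p.2.1) (hp₂ : 0 < p.2.2)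
    (Cη : ℝ) {cη C₂ : ℝ} (hcη : 0 < cη) (hC₂ : 0 < C₂) :
    StrictConcaveOn ℝ (Set.Icc cη Cη)
      (supOver (Set.Ioc 0 C₂) (Function.curry (asymPayoff τ γ Pε Pβ ν p))) := by
  set loss : ℝ → ℝ := fun M =>
    expectedMoreau (pinball τ) ((gaussianReal 0 1).prod Pε) (p.1, p.2.1, p.2.2 / M)
  set penalty : ℝ → ℝ → ℝ := fun M ρ =>
    γ * expectedCompensatedMoreau γ Pβ ν p.2.1 M ρ + (M * p.2.2 / 2 - p.2.1 * ρ / 2)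
  have hsplit : ∀ M, ∀ ρ ∈ Set.Ioc 0 C₂,
      Function.curry (asymPayoff τ γ Pε Pβ ν p) M ρ = loss M + penalty M ρ := fun M ρ hρ =>
    asymPayoff_eq hint hp₁.le (q := (M, ρ)) hρ.1
  have hloss : StrictConcaveOn ℝ (Set.Icc cη Cη) loss := by
    refine (strictConcaveOn_expectedMoreau_pinball_div hτ (integrable_id_gaussianReal.comp_fst Pε)
      (hPε.comp_snd (gaussianReal 0 1)) p.1 p.2.1 hp₂ hcη ?_).subset Set.Icc_subset_Ici_self
      (convex_Icc cη Cη)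
    simpa only [le_sub_iff_add_le] using gaussianReal_prod_halfSpace_ne_zero Pε hp₁.ne' _
  have hbdd : ∀ M, BddAbove (penalty M '' Set.Ioc 0 C₂) := fun M =>
    ⟨γ * (∫ z, ν (γ * z.2) ∂((gaussianReal 0 1).prod Pβ)) + M * p.2.2 / 2,
      Set.forall_mem_image.2 fun ρ hρ => by
        have hle := mul_le_mul_of_nonneg_left
          (hint.expectedCompensatedMoreau_le hν hp₁.le hρ.1 M) hγ
        have hcost : 0 ≤ p.2.1 * ρ := mul_nonneg hp₁.le hρ.1.le
        simp only [penalty]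
        linarith⟩
  have hpenalty : ConcaveOn ℝ (Set.Icc cη Cη) (supOver (Set.Ioc 0 C₂) penalty) :=
    concaveOn_supOver (convex_Icc cη Cη) (Set.nonempty_Ioc.2 hC₂)
      ((concaveOn_expectedCompensatedMoreau_add_linear hγ hν hint hp₁.le p.2.2).subset
        (fun _ hq => hq.2.1) ((convex_Icc cη Cη).prod (convex_Ioc 0 C₂))) fun M _ => hbdd M
  exact (hloss.add_concaveOn hpenalty).congr fun M _ =>
    (supOver_eq_add (Set.nonempty_Ioc.2 hC₂) (hbdd M) (hsplit M)).symm

theorem strictAntiOn_supOver_asymPayoff (hγ : 0 < γ) (hPε : Integrable (fun x => x) Pε)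
    (hPβ : MemLp (fun x => x) 2 Pβ) (hν : ConvexOn ℝ Set.univ ν)
    (hint : EnvelopeIntegrable γ Pβ ν) (hconj : ConjDerivAssumption γ Pβ ν) {p : ℝ × ℝ × ℝ}
    (hp₁ : 0 < p.2.1) (hp₂ : p.2.2 = 0) {C₂ : ℝ} (hC₂ : 0 < C₂) :
    StrictAntiOn (supOver (Set.Ioc 0 C₂) (Function.curry (asymPayoff τ γ Pε Pβ ν p)))
      (Set.Ioi 0) := by
  intro M hM N _ hMN
  obtain ⟨δ, hδ, hgap⟩ :=
    hint.exists_forall_expectedCompensatedMoreau_add_le hν hPβ hconj hp₁ hM hMN hC₂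
  refine (lt_add_of_pos_right _ (mul_pos hγ hδ)).trans_le
    (supOver_add_le (Set.nonempty_Ioc.2 hC₂) ?_ fun ρ hρ => ?_)
  · exact bddAbove_curry_image ((bddAbove_asymPayoff hγ.le hPε hν hint hp₁.le hp₂.ge M).mono <|
      Set.image_mono <| Set.prod_mono_right Set.Ioc_subset_Ioi_self) ⟨hM, le_rfl⟩
  · have hgap_ρ := mul_le_mul_of_nonneg_left (hgap ρ hρ) hγ.le
    rw [Function.curry_apply, Function.curry_apply, asymPayoff_eq hint hp₁.le (q := (N, ρ)) hρ.1,
      asymPayoff_eq hint hp₁.le (q := (M, ρ)) hρ.1]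
    simp only [hp₂, zero_div, mul_zero]
    linarith

theorem subsingleton_isMaxOn_supOver_asymPayoff (hτ : 0 < τ) (hγ : 0 < γ)
    (hPε : Integrable (fun x => x) Pε) (hPβ : MemLp (fun x => x) 2 Pβ)
    (hν : ConvexOn ℝ Set.univ ν) (hint : EnvelopeIntegrable γ Pβ ν)
    (hconj : ConjDerivAssumption γ Pβ ν) {p : ℝ × ℝ × ℝ} (hp₁ : 0 < p.2.1) (hp₂ : 0 ≤ p.2.2)
    {cη Cη C₂ : ℝ} (hcη : 0 < cη) (hC₂ : 0 < C₂) :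
    {M | M ∈ Set.Icc cη Cη ∧ IsMaxOn (supOver (Set.Ioc 0 C₂)
      (Function.curry (asymPayoff τ γ Pε Pβ ν p))) (Set.Icc cη Cη) M}.Subsingleton := by
  rintro M ⟨hM, hMmax⟩ N ⟨hN, hNmax⟩
  rcases hp₂.eq_or_lt' with hp₂ | hp₂
  · exact (strictAntiOn_supOver_asymPayoff hγ hPε hPβ hν hint hconj hp₁ hp₂ hC₂).injOn
      (hcη.trans_le hM.1) (hcη.trans_le hN.1) (le_antisymm (hNmax hM) (hMmax hN))
  · exact (strictConcaveOn_supOver_asymPayoff hτ hγ.le hPε hν hint hp₁ hp₂ Cη hcη hC₂).eq_of_isMaxOn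
      hMmax hNmax hM hN

end Uniqueness

theorem asym_program_unique_Meta_general {τ γ : ℝ} (hτ : 0 < τ) (hγ : 0 < γ) {Pε Pβ : Measure ℝ}
    [IsProbabilityMeasure Pε] [IsProbabilityMeasure Pβ] (hPε : Integrable (fun x => x) Pε)
    (hPβ : MemLp (fun x => x) 2 Pβ) {ν : ℝ → ℝ} (hν : ConvexOn ℝ Set.univ ν)
    (hint : EnvelopeIntegrable γ Pβ ν)
    (hνcont : ContinuousOn (fun q : ℝ × ℝ => ∫ z, moreau ν (q.1 * z.1 + γ * z.2) q.2
      ∂((gaussianReal 0 1).prod Pβ)) (Set.univ ×ˢ Set.Ici 0))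
    (hconj : ConjDerivAssumption γ Pβ ν) {Cβ0 Cu C₁ C₂ cη Cη : ℝ} (hCβ0 : 0 ≤ Cβ0) (hCu : 0 ≤ Cu)
    (hC₁ : 0 ≤ C₁) (hC₂ : 0 < C₂) (hcη : 0 < cη) (hcηCη : cη ≤ Cη)
    (hMu : ∀ p ∈ asymBox Cβ0 Cu C₁,
      IsMinOn (asymFmax τ γ Pε Pβ ν cη Cη C₂) (asymBox Cβ0 Cu C₁) p → 0 < p.2.1) :
    ∃! Mη : ℝ, Mη ∈ Set.Icc cη Cη ∧
      IsMaxOn (asymG τ γ Pε Pβ ν Cβ0 Cu C₁ C₂) (Set.Icc cη Cη) Mη := by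
  have hbox : IsCompact (asymBox Cβ0 Cu C₁) := isCompact_Icc.prod (isCompact_Icc.prod isCompact_Icc)
  have hbox_ne : (asymBox Cβ0 Cu C₁).Nonempty :=
    ⟨(0, 0, 0), ⟨neg_nonpos.2 hCβ0, hCβ0⟩, ⟨le_rfl, hCu⟩, ⟨le_rfl, hC₁⟩⟩
  exact (isConvexConcaveOn_asymPayoff hγ.le hPε hν hint hνcont Cβ0 Cu C₁ Cη C₂
    hcη).existsUnique_isMaxOn_supOver_infOver hbox hbox_ne isCompact_Icc
    (Set.nonempty_Icc.2 hcηCη) hC₂ fun p hp hmin =>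
      subsingleton_isMaxOn_supOver_asymPayoff hτ hγ hPε hPβ hν hint hconj (hMu p hp hmin)
        hp.2.2.1 hcη hC₂

/-- Lemma 14 of the paper, uniqueness of the optimal `M_η`.  With
`(β₀*, M_u*, ρ₁*)` the unique minimizing triple of the asymptotic program and `M_u* > 0`, the
function `M_η ↦ max_{ρ₂ ∈ (0,C₂]} min_{(β₀,M_u,ρ₁) ∈ box} A` attains its maximum over
`[c_η, C_η]` at a unique point. -/
theorem asym_program_unique_Meta
    (τ γ : ℝ) (hτ : τ ∈ Set.Ioo (0 : ℝ) 1) (hγ : γ ∈ Set.Ioo (0 : ℝ) (2 / Real.pi))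
    (Pε Pβ : Measure ℝ) [IsProbabilityMeasure Pε] [IsProbabilityMeasure Pβ]
    (hPε : NoiseAssumption Pε) (hPβ2 : Integrable (fun x => x ^ 2) Pβ)
    (ν : ℝ → ℝ) (hν : ConvexOn ℝ Set.univ ν)
    (hνfin : ∀ (c ρ : ℝ), 0 ≤ ρ →
      Integrable (fun z : ℝ × ℝ => moreau ν (c * z.1 + γ * z.2) ρ)
        ((gaussianReal 0 1).prod Pβ))
    (hνcont : ContinuousOn
      (fun q : ℝ × ℝ =>
        ∫ z, moreau ν (q.1 * z.1 + γ * z.2) q.2 ∂((gaussianReal 0 1).prod Pβ))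
      (Set.univ ×ˢ Set.Ici 0))
    (hνconj : ConjDerivAssumption γ Pβ ν)
    (Cβ0 Cu C₁ C₂ cη Cη : ℝ)
    (hCβ0 : 0 < Cβ0) (hCu : 0 < Cu) (hC₁ : 0 < C₁) (hC₂ : 0 < C₂)
    (hcη : 0 < cη) (hcηCη : cη < Cη)
    (hcη' : cη < Real.sqrt ((1 / 2) * min (τ ^ 2) ((1 - τ) ^ 2)))
    -- the unique minimizer (β₀*, M_u*, ρ₁*) of the asymptotic program has M_u* > 0
    (hMu : ∀ p ∈ asymBox Cβ0 Cu C₁,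
      IsMinOn (asymFmax τ γ Pε Pβ ν cη Cη C₂) (asymBox Cβ0 Cu C₁) p → 0 < p.2.1) :
    ∃! Mη : ℝ, Mη ∈ Set.Icc cη Cη ∧
      IsMaxOn (asymG τ γ Pε Pβ ν Cβ0 Cu C₁ C₂) (Set.Icc cη Cη) Mη :=
  asym_program_unique_Meta_general hτ.1 hγ.1
    (((memLp_two_iff_integrable_sq (by fun_prop)).2 hPε.second_moment).integrable one_le_two)
    ((memLp_two_iff_integrable_sq (by fun_prop)).2 hPβ2) hν hνfin hνcont hνconj hCβ0.le hCu.le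
    hC₁.le hC₂ hcη hcηCη.le hMu

end
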